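/- arXiv:0811.3595 — 2 statements merged into one kernel-verified Lean document; each statement's English description precedes it below -/
import Mathlib

section
/- (First-order asymptotics of the Weingarten function) For every σ ∈ S_n, the limit as the integer d → ∞ of d^{2n − cycles(σ)} · ∫_{U(d)} ∏_{i=1}^n u_{ii} · conj(u_{i σ(i)}) dU exists and equals (−1)^{n − cycles(σ)} · ∏_{c} Cat_{|c|−1}, where the product runs over the orbits c of σ on {1,…,n}. -/
open MeasureTheory

/-- The number of orbits of a permutation (cycles, counting fixed points). -/
def cycles {n : ℕ} (σ : Equiv.Perm (Fin n)) : ℕ :=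
  σ.cycleType.card + (Finset.univ.filter fun x => σ x = x).card

/-- The set of orbits of a permutation `σ` on `{1,…,n}` (as a finset of finsets:
each orbit is the set of points in the same cycle of a given point). -/
def orbitsOf {n : ℕ} (σ : Equiv.Perm (Fin n)) : Finset (Finset (Fin n)) :=
  Finset.univ.image fun x : Fin n => Finset.univ.filter fun y => σ.SameCycle x y

/-- The Borel σ-algebra on the unitary group `U(d)`. -/
noncomputable instance (d : ℕ) : MeasurableSpace (Matrix.unitaryGroup (Fin d) ℂ) :=
  borel _

section Comb

open Equiv Equiv.Perm

variable {α : Type*} [Fintype α] [DecidableEq α]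

noncomputable def wgtW (k : ℕ) : ℂ := (-1) ^ (k - 1) * (catalan (k - 1) : ℂ)

def nrmW (σ : Perm α) : ℕ := (σ.cycleType.map (fun k => k - 1)).sum

noncomputable def mobW (σ : Perm α) : ℂ := (σ.cycleType.map wgtW).prod

lemma wgtW_rec (m : ℕ) :
    wgtW (m + 2) = - ∑ j ∈ Finset.range (m + 1), wgtW (j + 1) * wgtW (m + 1 - j) := by
  simp only [wgtW]
  rw [show m + 2 - 1 = m + 1 by omega, catalan_succ',
    Finset.Nat.sum_antidiagonal_eq_sum_range_succ (fun x y => catalan x * catalan y)]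
  push_cast
  rw [Finset.mul_sum, ← Finset.sum_neg_distrib]
  refine Finset.sum_congr rfl fun j hj => ?_
  have hj' : j ≤ m := by simpa [Nat.lt_succ_iff] using hj
  obtain ⟨t, rfl⟩ := Nat.exists_eq_add_of_le hj'
  rw [show j + t + 1 - j - 1 = t by omega, show j + t - j = t by omega]
  ring

lemma nrmW_one : nrmW (1 : Perm α) = 0 := by simp [nrmW]

lemma mobW_one : mobW (1 : Perm α) = 1 := by simp [mobW]

lemma cycleType_formPerm_mul {A : List α} (hA : A.Nodup) (h2 : 2 ≤ A.length) (ρ : Perm α)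
    (hρ : ∀ x ∈ A, ρ x = x) : (A.formPerm * ρ).cycleType = A.length ::ₘ ρ.cycleType := by
  have hd : Disjoint A.formPerm ρ := by
    intro x
    by_cases hx : x ∈ A
    · exact Or.inr (hρ x hx)
    · exact Or.inl (List.formPerm_apply_of_notMem hx)
  rw [hd.cycleType_mul, (List.isCycle_formPerm hA h2).cycleType, List.support_formPerm_of_nodup A hA,
    List.toFinset_card_of_nodup hA, Multiset.singleton_add]
  rintro x rfl
  simp at h2

lemma nrmW_mul {a : α} {A : List α} (hA : (a :: A).Nodup) (ρ : Perm α)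
    (hρ : ∀ x ∈ a :: A, ρ x = x) : nrmW ((a :: A).formPerm * ρ) = A.length + nrmW ρ := by
  cases A with
  | nil => simp
  | cons b B =>
    rw [nrmW, cycleType_formPerm_mul hA (by simp) ρ hρ]
    simp [nrmW]

lemma mobW_mul {a : α} {A : List α} (hA : (a :: A).Nodup) (ρ : Perm α)
    (hρ : ∀ x ∈ a :: A, ρ x = x) :
    mobW ((a :: A).formPerm * ρ) = wgtW (A.length + 1) * mobW ρ := by
  cases A with
  | nil => simp [wgtW]
  | cons b B =>
    rw [mobW, cycleType_formPerm_mul hA (by simp) ρ hρ]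
    simp [mobW]

lemma exists_decomp (σ : Perm α) (a : α) : ∃ (A : List α) (ρ : Perm α), (a :: A).Nodup ∧
    σ = (a :: A).formPerm * ρ ∧ (∀ x ∈ a :: A, ρ x = x) ∧
    (∀ x, x ∈ a :: A ↔ σ.SameCycle a x) ∧ (∀ x, σ x = x → ρ x = x) := by
  by_cases ha : σ a = a
  · refine ⟨[], σ, by simp, by simp, by simpa using ha, fun x => ?_, fun x h => h⟩
    rw [List.mem_singleton]
    constructor
    · rintro rfl; exact SameCycle.refl _ _
    · rintro ⟨i, hi⟩
      rw [← hi]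
      exact Equiv.Perm.zpow_apply_eq_self_of_apply_eq_self ha i
  · have hs : a ∈ σ.support := mem_support.2 ha
    have hc : σ.toList a = a :: (σ.toList a).tail := by
      have h0 := toList_getElem_zero σ a hs
      cases h : σ.toList a with
      | nil => simp [h] at h0; exact absurd hs (toList_eq_nil_iff.1 h)
      | cons b B => simp [h] at h0; simp [h0]
    have hfix : ∀ x, σ.SameCycle a x → ((σ.cycleOf a)⁻¹ * σ) x = x := by
      intro x hx
      rw [Perm.mul_apply, Perm.inv_eq_iff_eq, hx.cycleOf_apply]
    refine ⟨(σ.toList a).tail, (σ.cycleOf a)⁻¹ * σ, ?_, ?_, ?_, ?_, ?_⟩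
    · rw [← hc]; exact nodup_toList _ _
    · rw [← hc, formPerm_toList]; simp
    · intro x hx
      rw [← hc, mem_toList_iff] at hx
      exact hfix x hx.1
    · intro x
      rw [← hc, mem_toList_iff]
      simp [hs]
    · intro x hx
      rw [Perm.mul_apply, hx, Perm.inv_eq_iff_eq, cycleOf_apply]
      split_ifs with h
      · exact hx.symm
      · rfl

lemma formPerm_append_cons (A B : List α) (x : α) :
    (A ++ x :: B).formPerm = (A ++ [x]).formPerm * (x :: B).formPerm := by
  induction A with
  | nil => simp
  | cons a A ih =>
    cases A with
    | nil => simp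
    | cons b A =>
      simp only [List.cons_append, List.formPerm_cons_cons] at ih ⊢
      rw [ih, mul_assoc]

lemma formPerm_concat (a l : α) (A : List α) (h : (a :: A ++ [l]).Nodup) :
    (a :: A ++ [l]).formPerm = swap a l * (a :: A).formPerm := by
  have h2 : (l :: a :: A).rotate 1 = a :: A ++ [l] := by simp
  have h3 : (l :: a :: A).Nodup := by rw [← List.nodup_rotate (n := 1), h2]; exact h
  rw [← h2, List.formPerm_rotate _ h3, List.formPerm_cons_cons, swap_comm]

lemma swap_mul_formPerm (a l : α) (A B : List α) (h : (a :: A ++ l :: B).Nodup) :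
    swap a l * (a :: A ++ l :: B).formPerm = (a :: A).formPerm * (l :: B).formPerm := by
  rw [formPerm_append_cons, formPerm_concat, mul_assoc, ← mul_assoc, swap_mul_self, one_mul]
  exact (List.Sublist.nodup (by simp) h)

lemma split_key (a l : α) (A B : List α) (h : (a :: A ++ l :: B).Nodup) (ρ : Perm α)
    (hρ : ∀ x ∈ a :: A ++ l :: B, ρ x = x) :
    nrmW (swap a l * ((a :: A ++ l :: B).formPerm * ρ)) = A.length + (B.length + nrmW ρ) ∧
    mobW (swap a l * ((a :: A ++ l :: B).formPerm * ρ)) =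
      wgtW (A.length + 1) * (wgtW (B.length + 1) * mobW ρ) := by
  rw [← mul_assoc, swap_mul_formPerm a l A B h, mul_assoc]
  have hA : (a :: A).Nodup := h.sublist (List.sublist_append_left _ _)
  have hB : (l :: B).Nodup := h.sublist (List.sublist_append_right _ _)
  have hdis : ∀ x ∈ a :: A, x ∉ l :: B := fun x hx hx' =>
    (List.disjoint_of_nodup_append h) hx hx'
  have h1 : ∀ x ∈ l :: B, ρ x = x := fun x hx => hρ x (List.mem_append_right _ hx)
  have h2 : ∀ x ∈ a :: A, ((l :: B).formPerm * ρ) x = x := fun x hx => by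
    rw [Perm.mul_apply, hρ x (List.mem_append_left _ hx),
      List.formPerm_apply_of_notMem (hdis x hx)]
  rw [nrmW_mul hA _ h2, mobW_mul hA _ h2, nrmW_mul hB _ h1, mobW_mul hB _ h1]
  exact ⟨rfl, rfl⟩

lemma nrmW_split (σ : Perm α) (a l : α) (hal : a ≠ l) (h : σ.SameCycle a l) :
    nrmW (swap a l * σ) + 1 = nrmW σ := by
  obtain ⟨A, ρ, hA, hσ, hρ, hm, -⟩ := exists_decomp σ a
  have hl : l ∈ A := by
    have := (hm l).2 h
    rcases List.mem_cons.1 this with h | h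
    · exact absurd h.symm hal
    · exact h
  obtain ⟨A1, B, rfl⟩ := List.append_of_mem hl
  have := (split_key a l A1 B hA ρ hρ).1
  rw [hσ, nrmW_mul hA ρ hρ]
  simp only [List.cons_append, List.length_append, List.length_cons] at this ⊢
  omega

lemma nrmW_merge (σ : Perm α) (a l : α) (h : ¬ σ.SameCycle a l) :
    nrmW (swap a l * σ) = nrmW σ + 1 := by
  obtain ⟨A, ρ, hA, hσ, hρ, hm, -⟩ := exists_decomp σ a
  have hl : l ∉ a :: A := fun hl => h ((hm l).1 hl)
  obtain ⟨B, ρ', hB, hρσ, hρ', hm', hfix⟩ := exists_decomp ρ l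
  have hdis : ∀ x ∈ a :: A, x ∉ l :: B := by
    intro x hx hx'
    have h1 := (hm' x).1 hx'
    have h2 : l = x := by
      obtain ⟨i, hi⟩ := h1.symm
      rw [← hi]
      exact Equiv.Perm.zpow_apply_eq_self_of_apply_eq_self (hρ x hx) i
    exact hl (h2 ▸ hx)
  have hN : (a :: A ++ l :: B).Nodup := List.Nodup.append hA hB (fun x hx hx' => hdis x hx hx')
  have hfx : ∀ x ∈ a :: A ++ l :: B, ρ' x = x := by
    intro x hx
    rcases List.mem_append.1 hx with hx | hx
    · exact hfix x (hρ x hx)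
    · exact hρ' x hx
  have e1 : swap a l * σ = (a :: A ++ l :: B).formPerm * ρ' := by
    have := swap_mul_formPerm a l A B hN
    rw [hσ, hρσ, ← mul_assoc, ← mul_assoc, mul_assoc (swap a l), ← this, ← mul_assoc, swap_mul_self,
      one_mul]
  have hn1 := nrmW_mul (A := A ++ l :: B) hN ρ' hfx
  rw [e1]
  rw [hσ, nrmW_mul hA ρ hρ, hρσ, nrmW_mul hB ρ' hρ']
  simp only [List.cons_append, List.length_append, List.length_cons] at hn1 ⊢
  omega

lemma list_sum_getElem {β : Type*} [AddCommMonoid β] (A : List α) (hA : A.Nodup) (F : α → β) :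
    ∑ l ∈ A.toFinset, F l = ∑ j : Fin A.length, F A[j] := by
  rw [List.sum_toFinset _ hA, ← List.sum_ofFn]
  congr 1
  conv_lhs => rw [← List.ofFn_getElem (xs := A)]
  rw [List.map_ofFn]; rfl

lemma mobW_rec (σ : Perm α) (a : α) (ha : σ a ≠ a) (T : Finset α)
    (hT : ∀ l, l ∈ T ↔ l ≠ a ∧ σ.SameCycle a l) :
    mobW σ = - ∑ l ∈ T, mobW (swap a l * σ) := by
  obtain ⟨A, ρ, hA, hσ, hρ, hm, -⟩ := exists_decomp σ a
  have hTA : T = A.toFinset := by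
    ext l
    rw [hT, List.mem_toFinset, ← hm, List.mem_cons]
    constructor
    · rintro ⟨h1, h2⟩; exact h2.resolve_left h1
    · intro h; exact ⟨fun h' => (List.nodup_cons.1 hA).1 (h' ▸ h), Or.inr h⟩
  rw [hTA, list_sum_getElem _ (List.nodup_cons.1 hA).2]
  have key : ∀ j : Fin A.length, mobW (swap a A[j] * σ) =
      wgtW (j + 1) * wgtW (A.length - j) * mobW ρ := by
    intro j
    have hsp : A = A.take j ++ A[j] :: A.drop (j + 1) := by simp
    have h1 : (a :: A.take j ++ A[j] :: A.drop (j + 1)) = a :: A := by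
      rw [List.cons_append, ← hsp]
    have := (split_key a A[j] (A.take j) (A.drop (j + 1)) (by rw [h1]; exact hA) ρ
      (by rw [h1]; exact hρ)).2
    rw [h1, ← hσ] at this
    rw [this, List.length_take, List.length_drop, min_eq_left j.2.le,
      show A.length - (j + 1) + 1 = A.length - j by omega, mul_assoc]
  simp_rw [key]
  rw [← Finset.sum_mul, hσ, mobW_mul hA ρ hρ,
    Fin.sum_univ_eq_sum_range (fun j => wgtW (j + 1) * wgtW (A.length - j)) A.length]
  cases A with
  | nil => 
    exfalso; apply ha; rw [hσ]; simpa using hρ a (by simp)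
  | cons b B =>
    simp only [List.length_cons]
    rw [wgtW_rec]; ring

lemma cycleType_mul_swap (σ : Perm α) (a l : α) :
    (σ * swap a l).cycleType = (swap a l * σ).cycleType := by
  have : σ * swap a l = (swap a l) * (swap a l * σ) * (swap a l)⁻¹ := by
    rw [← mul_assoc, swap_mul_self, one_mul, swap_inv]
  rw [this, cycleType_conj]

lemma nrmW_mul_swap (σ : Perm α) (a l : α) : nrmW (σ * swap a l) = nrmW (swap a l * σ) := by
  rw [nrmW, cycleType_mul_swap]; rfl

lemma mobW_mul_swap (σ : Perm α) (a l : α) : mobW (σ * swap a l) = mobW (swap a l * σ) := by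
  rw [mobW, cycleType_mul_swap]; rfl

end Comb
section Integ

variable {d : ℕ}

instance instBorelW (d : ℕ) : BorelSpace (Matrix.unitaryGroup (Fin d) ℂ) := ⟨rfl⟩

noncomputable def rotW (A L : Fin d) (α β γ δ : ℂ) : Matrix (Fin d) (Fin d) ℂ :=
  1 + Matrix.single A A (α - 1) + Matrix.single A L β + Matrix.single L A γ +
    Matrix.single L L (δ - 1)

lemma rotW_mul_A {A L : Fin d} (h : A ≠ L) (α β γ δ : ℂ) (V : Matrix (Fin d) (Fin d) ℂ) (c) :
    (rotW A L α β γ δ * V) A c = α * V A c + β * V L c := by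
  simp only [rotW, Matrix.add_mul, Matrix.one_mul, Matrix.add_apply, Matrix.single_mul_apply_same,
    Matrix.single_mul_apply_of_ne _ _ _ _ _ h]
  ring

lemma rotW_mul_L {A L : Fin d} (h : A ≠ L) (α β γ δ : ℂ) (V : Matrix (Fin d) (Fin d) ℂ) (c) :
    (rotW A L α β γ δ * V) L c = γ * V A c + δ * V L c := by
  simp only [rotW, Matrix.add_mul, Matrix.one_mul, Matrix.add_apply, Matrix.single_mul_apply_same,
    Matrix.single_mul_apply_of_ne _ _ _ _ _ h.symm]
  ring

lemma rotW_mul_ne {A L r : Fin d} (h1 : r ≠ A) (h2 : r ≠ L) (α β γ δ : ℂ)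
    (V : Matrix (Fin d) (Fin d) ℂ) (c) :
    (rotW A L α β γ δ * V) r c = V r c := by
  simp only [rotW, Matrix.add_mul, Matrix.one_mul, Matrix.add_apply,
    Matrix.single_mul_apply_of_ne _ _ _ _ _ h1, Matrix.single_mul_apply_of_ne _ _ _ _ _ h2]
  ring

lemma rotW_mem {A L : Fin d} (h : A ≠ L) (α β γ δ : ℂ)
    (h1 : α * star α + β * star β = 1) (h2 : γ * star γ + δ * star δ = 1)
    (h3 : α * star γ + β * star δ = 0) :
    rotW A L α β γ δ ∈ Matrix.unitaryGroup (Fin d) ℂ := by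
  have h4 : γ * star α + δ * star β = 0 := by
    have := congrArg star h3
    simpa [mul_comm] using this
  have hA : ∀ c, rotW A L α β γ δ A c = α * (1 : Matrix (Fin d) (Fin d) ℂ) A c +
      β * (1 : Matrix (Fin d) (Fin d) ℂ) L c := fun c => by
    rw [← rotW_mul_A h α β γ δ, mul_one]
  have hL : ∀ c, rotW A L α β γ δ L c = γ * (1 : Matrix (Fin d) (Fin d) ℂ) A c +
      δ * (1 : Matrix (Fin d) (Fin d) ℂ) L c := fun c => by
    rw [← rotW_mul_L h α β γ δ, mul_one]
  have hN : ∀ r c, r ≠ A → r ≠ L → rotW A L α β γ δ r c = (1 : Matrix (Fin d) (Fin d) ℂ) r c :=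
    fun r c h1 h2 => by
      rw [← rotW_mul_ne h1 h2 α β γ δ 1, mul_one]
  rw [Matrix.mem_unitaryGroup_iff]
  ext r c
  by_cases hrA : r = A
  · subst hrA
    rw [rotW_mul_A h, Matrix.star_apply, Matrix.star_apply]
    by_cases hcA : c = r
    · subst hcA; simpa [hA, h, h.symm] using h1
    by_cases hcL : c = L
    · subst hcL; simpa [hL, h, h.symm] using h3
    simp [hN c _ hcA hcL, hcA, hcL, Ne.symm hcA]
  by_cases hrL : r = L
  · subst hrL
    rw [rotW_mul_L h, Matrix.star_apply, Matrix.star_apply]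
    by_cases hcA : c = A
    · subst hcA; simpa [hA, h, h.symm] using h4
    by_cases hcL : c = r
    · subst hcL; simpa [hL, h, h.symm] using h2
    simp [hN c _ hcA hcL, hcA, hcL, Ne.symm hcL]
  rw [rotW_mul_ne hrA hrL, Matrix.star_apply]
  by_cases hcA : c = A
  · subst hcA; simp [hA, hrA, Ne.symm hrA, Ne.symm hrL]
  by_cases hcL : c = L
  · subst hcL; simp [hL, hrL, Ne.symm hrA, Ne.symm hrL]
  rw [hN c _ hcA hcL]
  simp [Matrix.one_apply, eq_comm]

lemma rotSwap_mem {A L : Fin d} (h : A ≠ L) :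
    rotW A L 0 1 1 0 ∈ Matrix.unitaryGroup (Fin d) ℂ := by
  apply rotW_mem h <;> simp

variable (μ : Measure (Matrix.unitaryGroup (Fin d) ℂ)) [μ.IsHaarMeasure] [IsProbabilityMeasure μ]

lemma cont_entry (r c : Fin d) : Continuous fun U : Matrix.unitaryGroup (Fin d) ℂ =>
    (U : Matrix (Fin d) (Fin d) ℂ) r c :=
  (continuous_subtype_val).matrix_elem r c

lemma integrable_of_le (f : Matrix.unitaryGroup (Fin d) ℂ → ℂ) (hf : Continuous f) (C : ℝ)
    (hC : ∀ U, ‖f U‖ ≤ C) : Integrable f μ :=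
  Integrable.of_bound hf.aestronglyMeasurable C (Filter.Eventually.of_forall hC)

lemma entry_le (U : Matrix.unitaryGroup (Fin d) ℂ) (r c : Fin d) :
    ‖(U : Matrix (Fin d) (Fin d) ℂ) r c‖ ≤ 1 := entry_norm_bound_of_unitary U.2 r c

noncomputable def fW {n : ℕ} (S : Finset (Fin n)) (r e : Fin n → Fin d) (σ : Equiv.Perm (Fin n))
    (U : Matrix.unitaryGroup (Fin d) ℂ) : ℂ :=
  (∏ i ∈ S, (U : Matrix (Fin d) (Fin d) ℂ) (r i) (e i)) *
    starRingEnd ℂ (∏ i ∈ S, (U : Matrix (Fin d) (Fin d) ℂ) (r i) (e (σ i)))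

variable {n : ℕ} (S : Finset (Fin n)) (r e : Fin n → Fin d) (σ : Equiv.Perm (Fin n))

lemma fW_cont : Continuous (fW S r e σ) := by
  unfold fW
  refine Continuous.mul ?_ (Complex.continuous_conj.comp ?_)
  · exact continuous_finsetProd _ fun i _ => cont_entry _ _
  · exact continuous_finsetProd _ fun i _ => cont_entry _ _

lemma fW_le (U) : ‖fW S r e σ U‖ ≤ 1 := by
  unfold fW
  rw [norm_mul, RCLike.norm_conj, norm_prod, norm_prod]
  refine mul_le_one₀ ?_ (Finset.prod_nonneg fun i _ => norm_nonneg _) ?_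
  · exact Finset.prod_le_one (fun i _ => norm_nonneg _) fun i _ => entry_le U _ _
  · exact Finset.prod_le_one (fun i _ => norm_nonneg _) fun i _ => entry_le U _ _

lemma fW_int : Integrable (fW S r e σ) μ := integrable_of_le μ _ (fW_cont S r e σ) 1 (fW_le S r e σ)

noncomputable def IW : ℂ := ∫ U, fW S r e σ U ∂μ

lemma IW_le : ‖IW μ S r e σ‖ ≤ 1 := by
  unfold IW
  have := norm_integral_le_of_norm_le_const (μ := μ) (Filter.Eventually.of_forall (fW_le S r e σ))
  simpa using this

lemma IW_empty : IW μ ∅ r e σ = 1 := by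
  simp [IW, fW]

/-- rows moved to an unused row -/
lemma IW_move {a : Fin n} (haS : a ∈ S) (he : Function.Injective e) (j : Fin d)
    (hj : ∀ i ∈ S, i ≠ a → e i ≠ j) :
    IW μ S (Function.update e a j) e σ = IW μ S e e σ := by
  by_cases hja : j = e a
  · rw [hja, Function.update_eq_self]
  have hne : e a ≠ j := Ne.symm hja
  let g : Matrix.unitaryGroup (Fin d) ℂ := ⟨rotW (e a) j 0 1 1 0, rotSwap_mem hne⟩
  unfold IW
  rw [← integral_mul_left_eq_self (fW S e e σ) g]
  congr 1
  ext U
  have key : ∀ i ∈ S, ∀ c, ((g * U : Matrix.unitaryGroup (Fin d) ℂ) : Matrix (Fin d) (Fin d) ℂ)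
      (e i) c = (U : Matrix (Fin d) (Fin d) ℂ) (Function.update e a j i) c := by
    intro i hi c
    change (rotW (e a) j 0 1 1 0 * (U : Matrix (Fin d) (Fin d) ℂ)) (e i) c = _
    by_cases hia : i = a
    · subst hia
      rw [rotW_mul_A hne]; simp
    · rw [rotW_mul_ne (fun h => hia (he h)) (hj i hi hia)]
      simp [hia]
  unfold fW
  congr 1
  · exact Finset.prod_congr rfl fun i hi => (key i hi _).symm
  · congr 1
    exact Finset.prod_congr rfl fun i hi => (key i hi _).symm

noncomputable def qW (p q p2 q2 c1 c2 c3 c4 : Fin d) (F : Matrix.unitaryGroup (Fin d) ℂ → ℂ)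
    (U : Matrix.unitaryGroup (Fin d) ℂ) : ℂ :=
  (U : Matrix (Fin d) (Fin d) ℂ) p c1 * (U : Matrix (Fin d) (Fin d) ℂ) q c2 *
    starRingEnd ℂ ((U : Matrix (Fin d) (Fin d) ℂ) p2 c3 * (U : Matrix (Fin d) (Fin d) ℂ) q2 c4) *
    F U

lemma qW_int (p q p2 q2 c1 c2 c3 c4 : Fin d) (F : Matrix.unitaryGroup (Fin d) ℂ → ℂ)
    (hF : Continuous F) (hF1 : ∀ U, ‖F U‖ ≤ 1) :
    Integrable (qW p q p2 q2 c1 c2 c3 c4 F) μ := by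
  apply integrable_of_le μ _ _ 1
  · intro U
    unfold qW
    rw [norm_mul, norm_mul, norm_mul, RCLike.norm_conj, norm_mul]
    refine mul_le_one₀ (mul_le_one₀ (mul_le_one₀ (entry_le _ _ _) (norm_nonneg _) (entry_le _ _ _))
      (by positivity) (mul_le_one₀ (entry_le _ _ _) (norm_nonneg _) (entry_le _ _ _)))
      (norm_nonneg _) (hF1 U)
  · unfold qW
    exact (((cont_entry _ _).mul (cont_entry _ _)).mul
      (Complex.continuous_conj.comp ((cont_entry _ _).mul (cont_entry _ _)))).mul hF

lemma integral_aux {f1 f2 f3 f4 q1 q2 q3 q4 q5 q6 : Matrix.unitaryGroup (Fin d) ℂ → ℂ}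
    (i1 : Integrable f1 μ) (i2 : Integrable f2 μ) (i3 : Integrable f3 μ) (i4 : Integrable f4 μ)
    (j1 : Integrable q1 μ) (j2 : Integrable q2 μ) (j3 : Integrable q3 μ) (j4 : Integrable q4 μ)
    (j5 : Integrable q5 μ) (j6 : Integrable q6 μ)
    (h : ∀ U, f1 U + f2 U + f3 U + f4 U = 4 * (q1 U + q2 U + q3 U + q4 U + q5 U + q6 U)) :
    ∫ U, f1 U ∂μ + ∫ U, f2 U ∂μ + ∫ U, f3 U ∂μ + ∫ U, f4 U ∂μ =
      4 * (∫ U, q1 U ∂μ + ∫ U, q2 U ∂μ + ∫ U, q3 U ∂μ + ∫ U, q4 U ∂μ + ∫ U, q5 U ∂μ +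
        ∫ U, q6 U ∂μ) := by
  have l := integral_add' ((i1.add i2).add i3) i4
  rw [integral_add' (i1.add i2) i3, integral_add' i1 i2] at l
  have r := integral_add' ((((j1.add j2).add j3).add j4).add j5) j6
  rw [integral_add' (((j1.add j2).add j3).add j4) j5, integral_add' ((j1.add j2).add j3) j4,
    integral_add' (j1.add j2) j3, integral_add' j1 j2] at r
  rw [← l, ← r, ← integral_const_mul]
  exact integral_congr_ae (Filter.Eventually.of_forall h)

lemma qW_key {A L : Fin d} (h : A ≠ L) (c1 c2 c3 c4 : Fin d)
    (F : Matrix.unitaryGroup (Fin d) ℂ → ℂ)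
    (hF : Continuous F) (hF1 : ∀ U, ‖F U‖ ≤ 1)
    (hinv : ∀ (g U : Matrix.unitaryGroup (Fin d) ℂ) α β γ δ,
      (g : Matrix (Fin d) (Fin d) ℂ) = rotW A L α β γ δ → F (g * U) = F U) :
    ∫ U, qW L L L L c1 c2 c3 c4 F U ∂μ =
      ∫ U, qW A L A L c1 c2 c3 c4 F U ∂μ + ∫ U, qW A L L A c1 c2 c3 c4 F U ∂μ := by
  have I := fun p q p2 q2 => qW_int μ p q p2 q2 c1 c2 c3 c4 F hF hF1
  -- swap symmetry
  let s : Matrix.unitaryGroup (Fin d) ℂ := ⟨rotW A L 0 1 1 0, rotSwap_mem h⟩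
  have sA : ∀ (U : Matrix.unitaryGroup (Fin d) ℂ) c,
      ((s * U : Matrix.unitaryGroup (Fin d) ℂ) : Matrix (Fin d) (Fin d) ℂ) A c =
        (U : Matrix (Fin d) (Fin d) ℂ) L c := fun U c => by
    change (rotW A L 0 1 1 0 * (U : Matrix (Fin d) (Fin d) ℂ)) A c = _
    rw [rotW_mul_A h]; simp
  have sL : ∀ (U : Matrix.unitaryGroup (Fin d) ℂ) c,
      ((s * U : Matrix.unitaryGroup (Fin d) ℂ) : Matrix (Fin d) (Fin d) ℂ) L c =
        (U : Matrix (Fin d) (Fin d) ℂ) A c := fun U c => by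
    change (rotW A L 0 1 1 0 * (U : Matrix (Fin d) (Fin d) ℂ)) L c = _
    rw [rotW_mul_L h]; simp
  have sF : ∀ U, F (s * U) = F U := fun U => hinv s U 0 1 1 0 rfl
  have e1 : ∫ U, qW A A A A c1 c2 c3 c4 F U ∂μ = ∫ U, qW L L L L c1 c2 c3 c4 F U ∂μ := by
    rw [← integral_mul_left_eq_self (qW L L L L c1 c2 c3 c4 F) s]
    simp only [qW, sL, sF]
  have e2 : ∫ U, qW L A L A c1 c2 c3 c4 F U ∂μ = ∫ U, qW A L A L c1 c2 c3 c4 F U ∂μ := by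
    rw [← integral_mul_left_eq_self (qW A L A L c1 c2 c3 c4 F) s]
    simp only [qW, sL, sA, sF]
  have e3 : ∫ U, qW L A A L c1 c2 c3 c4 F U ∂μ = ∫ U, qW A L L A c1 c2 c3 c4 F U ∂μ := by
    rw [← integral_mul_left_eq_self (qW A L L A c1 c2 c3 c4 F) s]
    simp only [qW, sL, sA, sF]
  -- rotations
  obtain ⟨c, hc, hc2⟩ : ∃ c : ℂ, star c = c ∧ 2 * (c * c) = 1 := by
    refine ⟨((Real.sqrt (1 / 2) : ℝ) : ℂ), Complex.conj_ofReal _, ?_⟩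
    rw [← Complex.ofReal_mul, Real.mul_self_sqrt (by norm_num)]
    norm_num
  have rot : ∀ ω : ℂ, ω * star ω = 1 →
      Integrable (fun U : Matrix.unitaryGroup (Fin d) ℂ =>
        (ω * (U : Matrix (Fin d) (Fin d) ℂ) A c1 + (U : Matrix (Fin d) (Fin d) ℂ) L c1) *
        (ω * (U : Matrix (Fin d) (Fin d) ℂ) A c2 + (U : Matrix (Fin d) (Fin d) ℂ) L c2) *
        ((star ω * star ((U : Matrix (Fin d) (Fin d) ℂ) A c3) +
            star ((U : Matrix (Fin d) (Fin d) ℂ) L c3)) *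
        (star ω * star ((U : Matrix (Fin d) (Fin d) ℂ) A c4) +
            star ((U : Matrix (Fin d) (Fin d) ℂ) L c4))) * F U) μ ∧
      ∫ U : Matrix.unitaryGroup (Fin d) ℂ,
        (ω * (U : Matrix (Fin d) (Fin d) ℂ) A c1 + (U : Matrix (Fin d) (Fin d) ℂ) L c1) *
        (ω * (U : Matrix (Fin d) (Fin d) ℂ) A c2 + (U : Matrix (Fin d) (Fin d) ℂ) L c2) *
        ((star ω * star ((U : Matrix (Fin d) (Fin d) ℂ) A c3) +
            star ((U : Matrix (Fin d) (Fin d) ℂ) L c3)) *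
        (star ω * star ((U : Matrix (Fin d) (Fin d) ℂ) A c4) +
            star ((U : Matrix (Fin d) (Fin d) ℂ) L c4))) * F U ∂μ =
      4 * ∫ U, qW L L L L c1 c2 c3 c4 F U ∂μ := by
    intro ω hω
    have hm : rotW A L c (-(c * star ω)) (c * ω) c ∈ Matrix.unitaryGroup (Fin d) ℂ := by
      apply rotW_mem h
      · rw [star_neg, star_mul, star_star, hc]; linear_combination hc2 + c * c * hω
      · rw [star_mul, hc]; linear_combination hc2 + c * c * hω
      · rw [star_mul, hc]; ring
    let g : Matrix.unitaryGroup (Fin d) ℂ := ⟨_, hm⟩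
    have gL : ∀ (U : Matrix.unitaryGroup (Fin d) ℂ) k,
      ((g * U : Matrix.unitaryGroup (Fin d) ℂ) : Matrix (Fin d) (Fin d) ℂ) L k =
        c * ω * (U : Matrix (Fin d) (Fin d) ℂ) A k + c * (U : Matrix (Fin d) (Fin d) ℂ) L k :=
      fun U k => rotW_mul_L h _ _ _ _ _ _
    have gF : ∀ U, F (g * U) = F U := fun U => hinv g U _ _ _ _ rfl
    have hEq : (fun U : Matrix.unitaryGroup (Fin d) ℂ =>
        (ω * (U : Matrix (Fin d) (Fin d) ℂ) A c1 + (U : Matrix (Fin d) (Fin d) ℂ) L c1) *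
        (ω * (U : Matrix (Fin d) (Fin d) ℂ) A c2 + (U : Matrix (Fin d) (Fin d) ℂ) L c2) *
        ((star ω * star ((U : Matrix (Fin d) (Fin d) ℂ) A c3) +
            star ((U : Matrix (Fin d) (Fin d) ℂ) L c3)) *
        (star ω * star ((U : Matrix (Fin d) (Fin d) ℂ) A c4) +
            star ((U : Matrix (Fin d) (Fin d) ℂ) L c4))) * F U) =
        fun U => 4 * qW L L L L c1 c2 c3 c4 F (g * U) := by
      ext U
      have hc' : starRingEnd ℂ c = c := hc
      simp only [qW, gL, gF, map_mul, map_add, hc']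
      simp only [starRingEnd_apply]
      have : c ^ 4 * 4 = 1 := by linear_combination (2 * (c * c) + 1) * hc2
      generalize (U : Matrix (Fin d) (Fin d) ℂ) A c1 = x1
      generalize (U : Matrix (Fin d) (Fin d) ℂ) A c2 = x2
      generalize star ((U : Matrix (Fin d) (Fin d) ℂ) A c3) = x3
      generalize star ((U : Matrix (Fin d) (Fin d) ℂ) A c4) = x4
      generalize (U : Matrix (Fin d) (Fin d) ℂ) L c1 = y1
      generalize (U : Matrix (Fin d) (Fin d) ℂ) L c2 = y2
      generalize star ((U : Matrix (Fin d) (Fin d) ℂ) L c3) = y3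
      generalize star ((U : Matrix (Fin d) (Fin d) ℂ) L c4) = y4
      generalize star ω = ω2
      linear_combination (-(ω * x1 + y1) * (ω * x2 + y2) *
        ((ω2 * x3 + y3) * (ω2 * x4 + y4)) * F U) * this
    rw [hEq]
    refine ⟨((I L L L L).comp_mul_left g).const_mul 4, ?_⟩
    rw [integral_const_mul, integral_mul_left_eq_self (qW L L L L c1 c2 c3 c4 F) g]
  obtain ⟨i1, r1⟩ := rot 1 (by simp)
  obtain ⟨i2, r2⟩ := rot (-1) (by simp)
  obtain ⟨i3, r3⟩ := rot Complex.I (by simp)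
  obtain ⟨i4, r4⟩ := rot (-Complex.I) (by simp)
  have tot : 16 * ∫ U, qW L L L L c1 c2 c3 c4 F U ∂μ =
      4 * (∫ U, qW L L L L c1 c2 c3 c4 F U ∂μ + ∫ U, qW A A A A c1 c2 c3 c4 F U ∂μ +
      ∫ U, qW A L A L c1 c2 c3 c4 F U ∂μ + ∫ U, qW L A L A c1 c2 c3 c4 F U ∂μ +
      ∫ U, qW A L L A c1 c2 c3 c4 F U ∂μ + ∫ U, qW L A A L c1 c2 c3 c4 F U ∂μ) := by
    calc _ = 4 * (∫ U, qW L L L L c1 c2 c3 c4 F U ∂μ) + 4 * (∫ U, qW L L L L c1 c2 c3 c4 F U ∂μ) +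
        4 * (∫ U, qW L L L L c1 c2 c3 c4 F U ∂μ) + 4 * (∫ U, qW L L L L c1 c2 c3 c4 F U ∂μ) := by
          ring
      _ = _ := by
        nth_rewrite 1 [← r1]
        nth_rewrite 1 [← r2]
        nth_rewrite 1 [← r3]
        nth_rewrite 1 [← r4]
        refine integral_aux μ i1 i2 i3 i4 (I _ _ _ _) (I _ _ _ _) (I _ _ _ _) (I _ _ _ _)
          (I _ _ _ _) (I _ _ _ _) ?_
        intro U
        simp only [qW, map_mul,
          Complex.star_def, Complex.conj_I, map_neg, map_one]
        have hI := Complex.I_mul_I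
        generalize (U : Matrix (Fin d) (Fin d) ℂ) A c1 = x1
        generalize (U : Matrix (Fin d) (Fin d) ℂ) A c2 = x2
        generalize (starRingEnd ℂ) ((U : Matrix (Fin d) (Fin d) ℂ) A c3) = x3
        generalize (starRingEnd ℂ) ((U : Matrix (Fin d) (Fin d) ℂ) A c4) = x4
        generalize (U : Matrix (Fin d) (Fin d) ℂ) L c1 = y1
        generalize (U : Matrix (Fin d) (Fin d) ℂ) L c2 = y2
        generalize (starRingEnd ℂ) ((U : Matrix (Fin d) (Fin d) ℂ) L c3) = y3
        generalize (starRingEnd ℂ) ((U : Matrix (Fin d) (Fin d) ℂ) L c4) = y4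
        ring_nf
        simp only [Complex.I_sq, Complex.I_pow_four]
        ring
  rw [e1, e2, e3] at tot
  linear_combination tot / 8

lemma IW_two {a l : Fin n} (hal : a ≠ l) (ha : a ∈ S) (hl : l ∈ S) (he : Function.Injective e) :
    IW μ S (Function.update e a (e l)) e σ = IW μ S e e σ + IW μ S e e (σ * Equiv.swap a l) := by
  obtain ⟨T, hT, rfl⟩ : ∃ T : Finset (Fin n), (a ∉ T ∧ l ∉ T) ∧ S = insert a (insert l T) := by
    refine ⟨(S.erase a).erase l, by simp, ?_⟩
    ext x
    simp only [Finset.mem_insert, Finset.mem_erase]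
    by_cases h1 : x = a
    · simp [h1, ha]
    by_cases h2 : x = l
    · simp [h2, hl]
    simp [h1, h2]
  have hA : e a ≠ e l := fun h => hal (he h)
  have haT : a ∉ insert l T := by simp [hal, hT.1]
  have key := qW_key μ hA (e a) (e l) (e (σ a)) (e (σ l)) (fW T e e σ) (fW_cont _ _ _ _)
    (fW_le _ _ _ _) (by
      intro g U α β γ δ hg
      have : ∀ i ∈ T, ∀ c, ((g * U : Matrix.unitaryGroup (Fin d) ℂ) : Matrix (Fin d) (Fin d) ℂ)
          (e i) c = (U : Matrix (Fin d) (Fin d) ℂ) (e i) c := by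
        intro i hi c
        change ((g : Matrix (Fin d) (Fin d) ℂ) * (U : Matrix (Fin d) (Fin d) ℂ)) (e i) c = _
        rw [hg, rotW_mul_ne]
        · intro h; exact hT.1 (he h ▸ hi)
        · intro h; exact hT.2 (he h ▸ hi)
      unfold fW
      congr 1
      · exact Finset.prod_congr rfl fun i hi => this i hi _
      · congr 1
        exact Finset.prod_congr rfl fun i hi => this i hi _)
  have t1 : ∀ i ∈ T, i ≠ a := fun i hi h => hT.1 (h ▸ hi)
  have t2 : ∀ i ∈ T, i ≠ l := fun i hi h => hT.2 (h ▸ hi)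
  unfold IW
  convert key using 2
  · congr 1
    ext U
    simp only [fW, qW]
    simp only [Finset.prod_insert haT, Finset.prod_insert hT.2, Function.update_self,
      Function.update_of_ne hal.symm]
    rw [Finset.prod_congr rfl (fun i hi => by rw [Function.update_of_ne (t1 i hi)]),
      Finset.prod_congr (s₁ := T) (f := fun x => (U : Matrix (Fin d) (Fin d) ℂ)
        (Function.update e a (e l) x) (e (σ x))) rfl
        (fun i hi => by rw [Function.update_of_ne (t1 i hi)])]
    simp only [map_mul]
    ring
  · congr 1
    ext U
    simp only [fW, qW]
    simp only [Finset.prod_insert haT, Finset.prod_insert hT.2, map_mul]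
    ring
  · congr 1
    ext U
    simp only [fW, qW]
    simp only [Finset.prod_insert haT, Finset.prod_insert hT.2, Equiv.Perm.mul_apply,
      Equiv.swap_apply_left, Equiv.swap_apply_right]
    rw [Finset.prod_congr (s₁ := T) (f := fun x => (U : Matrix (Fin d) (Fin d) ℂ)
        (e x) (e (σ (Equiv.swap a l x)))) rfl
        (fun i hi => by rw [Equiv.swap_apply_of_ne_of_ne (t1 i hi) (t2 i hi)])]
    simp only [map_mul]
    ring

lemma IW_rec {a : Fin n} (ha : a ∈ S) (he : Function.Injective e) :
    (d : ℂ) * IW μ S e e σ = (if σ a = a then IW μ (S.erase a) e e σ else 0) -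
      ∑ l ∈ S.erase a, IW μ S e e (σ * Equiv.swap a l) := by
  have hsum : ∑ j : Fin d, IW μ S (Function.update e a j) e σ =
      if σ a = a then IW μ (S.erase a) e e σ else 0 := by
    unfold IW
    rw [← integral_finsetSum _ (fun j _ => fW_int μ S _ e σ)]
    have : ∀ U, ∑ j : Fin d, fW S (Function.update e a j) e σ U =
        if σ a = a then fW (S.erase a) e e σ U else 0 := by
      intro U
      have h1 : ∀ j, fW S (Function.update e a j) e σ U =
          fW (S.erase a) e e σ U * (star ((U : Matrix (Fin d) (Fin d) ℂ) j (e (σ a))) *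
          (U : Matrix (Fin d) (Fin d) ℂ) j (e a)) := by
        intro j
        unfold fW
        rw [← Finset.mul_prod_erase S _ ha, ← Finset.mul_prod_erase S _ ha]
        rw [Finset.prod_congr (s₁ := S.erase a) rfl (fun i hi => by
            rw [Function.update_of_ne (Finset.ne_of_mem_erase hi)]),
          Finset.prod_congr (s₁ := S.erase a) (f := fun x => (U : Matrix (Fin d) (Fin d) ℂ)
            (Function.update e a j x) (e (σ x))) rfl (fun i hi => by
            rw [Function.update_of_ne (Finset.ne_of_mem_erase hi)])]
        simp only [map_mul, Function.update_self, starRingEnd_apply]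
        ring
      simp_rw [h1]
      rw [← Finset.mul_sum]
      have h2 : ∑ j, (star ((U : Matrix (Fin d) (Fin d) ℂ) j (e (σ a))) *
          (U : Matrix (Fin d) (Fin d) ℂ) j (e a)) = if σ a = a then 1 else 0 := by
        have h3 := congrFun (congrFun (Matrix.mem_unitaryGroup_iff'.1 U.2) (e (σ a))) (e a)
        rw [Matrix.mul_apply] at h3
        simp only [Matrix.star_apply] at h3
        rw [h3, Matrix.one_apply]
        simp [he.eq_iff]
      rw [h2]
      split_ifs <;> simp
    simp_rw [this]
    split_ifs <;> simp
  have hsplit : ∑ j : Fin d, IW μ S (Function.update e a j) e σ =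
      ∑ j : Fin d, IW μ S e e σ + ∑ l ∈ S.erase a, IW μ S e e (σ * Equiv.swap a l) := by
    have hinj : Set.InjOn e (S.erase a : Set (Fin n)) := he.injOn
    rw [← sub_eq_iff_eq_add', ← Finset.sum_sub_distrib,
      ← Finset.sum_subset (Finset.subset_univ ((S.erase a).image e)), Finset.sum_image hinj]
    · refine Finset.sum_congr rfl fun l hl => ?_
      rw [IW_two μ S e σ (Finset.ne_of_mem_erase hl).symm ha (Finset.mem_of_mem_erase hl) he]
      ring
    · intro j _ hj
      rw [IW_move μ S e σ ha he j, sub_self]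
      intro i hi hia h
      exact hj (Finset.mem_image.2 ⟨i, Finset.mem_erase.2 ⟨hia, hi⟩, h⟩)
  rw [← hsum, hsplit]
  simp

end Integ
section Fin

open Equiv Equiv.Perm Asymptotics Filter

lemma asymp_bdd {n : ℕ} (W : Finset (Fin n) → Perm (Fin n) → ℕ → ℂ) (D : ℕ → ℂ)
    (h1 : ∀ S σ k, ‖W S σ k‖ ≤ 1)
    (hrec : ∀ S σ a k, a ∈ S → D k * W S σ k = (if σ a = a then W (S.erase a) σ k else 0) -
      ∑ l ∈ S.erase a, W S (σ * swap a l) k) (p : ℕ) :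
    ∀ S σ, σ.support ⊆ S → p ≤ S.card + nrmW σ →
      (fun k => D k ^ p * W S σ k) =O[atTop] (fun _ => (1 : ℝ)) := by
  induction p with
  | zero =>
    intro S σ _ _
    refine IsBigO.of_bound 1 (Eventually.of_forall fun k => ?_)
    simpa using h1 S σ k
  | succ p ih =>
    intro S σ hS hp
    rcases S.eq_empty_or_nonempty with rfl | ⟨a, ha⟩
    · have : σ = 1 := by
        rw [← support_eq_empty_iff]; exact Finset.subset_empty.1 hS
      subst this
      simp [nrmW_one] at hp
    have heq : (fun k => D k ^ (p + 1) * W S σ k) = fun k =>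
        (if σ a = a then D k ^ p * W (S.erase a) σ k else 0) -
          ∑ l ∈ S.erase a, D k ^ p * W S (σ * swap a l) k := by
      ext k
      rw [pow_succ, mul_assoc, hrec S σ a k ha, mul_sub, Finset.mul_sum]
      split_ifs <;> simp
    have hc : (S.erase a).card + 1 = S.card := Finset.card_erase_add_one ha
    rw [heq]
    refine IsBigO.sub ?_ (IsBigO.fun_sum fun l hl => ?_)
    · split_ifs with hfix
      · refine ih _ _ (fun x hx => Finset.mem_erase.2 ⟨?_, hS hx⟩) (by omega)
        rintro rfl
        exact (mem_support.1 hx) hfix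
      · exact isBigO_zero _ _
    · have hl' := Finset.mem_erase.1 hl
      apply ih
      · intro x hx
        by_contra hxS
        have hxa : x ≠ a := fun h => hxS (h ▸ ha)
        have hxl : x ≠ l := fun h => hxS (h ▸ hl'.2)
        rw [mem_support, Perm.mul_apply, swap_apply_of_ne_of_ne hxa hxl] at hx
        exact hxS (hS (mem_support.2 hx))
      · rw [nrmW_mul_swap]
        by_cases hs : σ.SameCycle a l
        · have := nrmW_split σ a l hl'.1.symm hs
          omega
        · have := nrmW_merge σ a l hs
          omega

lemma asymp_lim {n : ℕ} (W : Finset (Fin n) → Perm (Fin n) → ℕ → ℂ) (D : ℕ → ℂ)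
    (hD : Tendsto (fun k => (D k)⁻¹) atTop (nhds 0)) (hD0 : ∀ k, D k ≠ 0)
    (h0 : ∀ σ k, W ∅ σ k = 1)
    (h1 : ∀ S σ k, ‖W S σ k‖ ≤ 1)
    (hrec : ∀ S σ a k, a ∈ S → D k * W S σ k = (if σ a = a then W (S.erase a) σ k else 0) -
      ∑ l ∈ S.erase a, W S (σ * swap a l) k) (N : ℕ) :
    ∀ S σ, σ.support ⊆ S → S.card + nrmW σ = N →
      Tendsto (fun k => D k ^ N * W S σ k) atTop (nhds (mobW σ)) := by
  induction N with
  | zero =>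
    intro S σ hS hN
    have hS0 : S = ∅ := by rw [← Finset.card_eq_zero]; omega
    subst hS0
    have : σ = 1 := by
      rw [← support_eq_empty_iff]; exact Finset.subset_empty.1 hS
    subst this
    simp [h0, mobW_one]
  | succ N ih =>
    intro S σ hS hN
    rcases S.eq_empty_or_nonempty with rfl | ⟨a, ha⟩
    · have : σ = 1 := by
        rw [← support_eq_empty_iff]; exact Finset.subset_empty.1 hS
      subst this
      simp [nrmW_one] at hN
    have heq : (fun k => D k ^ (N + 1) * W S σ k) = fun k =>
        (if σ a = a then D k ^ N * W (S.erase a) σ k else 0) -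
          ∑ l ∈ S.erase a, D k ^ N * W S (σ * swap a l) k := by
      ext k
      rw [pow_succ, mul_assoc, hrec S σ a k ha, mul_sub, Finset.mul_sum]
      split_ifs <;> simp
    have hc : (S.erase a).card + 1 = S.card := Finset.card_erase_add_one ha
    have hlim : mobW σ = (if σ a = a then mobW σ else 0) -
        ∑ l ∈ S.erase a, (if σ.SameCycle a l then mobW (swap a l * σ) else 0) := by
      rw [← Finset.sum_filter]
      split_ifs with hfix
      · rw [Finset.filter_false_of_mem, Finset.sum_empty, sub_zero]
        rintro l hl ⟨i, hi⟩
        apply (Finset.mem_erase.1 hl).1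
        rw [← hi]
        exact Equiv.Perm.zpow_apply_eq_self_of_apply_eq_self hfix i
      · rw [zero_sub]
        apply mobW_rec σ a hfix
        intro l
        simp only [Finset.mem_filter, Finset.mem_erase]
        constructor
        · rintro ⟨⟨h, _⟩, h'⟩; exact ⟨h, h'⟩
        · rintro ⟨h, h'⟩
          refine ⟨⟨h, hS ?_⟩, h'⟩
          rw [mem_support]
          intro hh
          exact hfix (h'.apply_eq_self_iff.2 hh)
    rw [heq, hlim]
    refine Tendsto.sub ?_ (tendsto_finsetSum _ fun l hl => ?_)
    · split_ifs with hfix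
      · refine ih _ _ (fun x hx => Finset.mem_erase.2 ⟨?_, hS hx⟩) (by omega)
        rintro rfl
        exact (mem_support.1 hx) hfix
      · exact tendsto_const_nhds
    · have hl' := Finset.mem_erase.1 hl
      have hsup : (σ * swap a l).support ⊆ S := by
        intro x hx
        by_contra hxS
        have hxa : x ≠ a := fun h => hxS (h ▸ ha)
        have hxl : x ≠ l := fun h => hxS (h ▸ hl'.2)
        rw [mem_support, Perm.mul_apply, swap_apply_of_ne_of_ne hxa hxl] at hx
        exact hxS (hS (mem_support.2 hx))
      split_ifs with hs
      · rw [← mobW_mul_swap]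
        apply ih _ _ hsup
        have := nrmW_split σ a l hl'.1.symm hs
        rw [nrmW_mul_swap]
        omega
      · have hm := nrmW_merge σ a l hs
        have hb := asymp_bdd W D h1 hrec (N + 1) S (σ * swap a l) hsup
          (by rw [nrmW_mul_swap]; omega)
        have ho : (fun k => (D k)⁻¹) =o[atTop] (fun _ => (1 : ℝ)) := by
          rw [isLittleO_one_iff]; exact hD
        have := ho.mul_isBigO hb
        simp only [mul_one] at this
        rw [isLittleO_one_iff] at this
        refine this.congr fun k => ?_
        rw [pow_succ, ← mul_assoc, mul_comm (D k ^ N), inv_mul_cancel_left₀ (hD0 k)]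

lemma multiset_aux (s : Multiset ℕ) (h : ∀ k ∈ s, 2 ≤ k) :
    (s.map (fun k => k - 1)).sum + s.card = s.sum ∧
    (s.map wgtW).prod = (-1) ^ (s.map (fun k => k - 1)).sum *
      (s.map (fun k => (catalan (k - 1) : ℂ))).prod := by
  induction s using Multiset.induction with
  | empty => simp
  | cons a s ih =>
    obtain ⟨h1, h2⟩ := ih fun k hk => h k (Multiset.mem_cons_of_mem hk)
    have ha := h a (Multiset.mem_cons_self _ _)
    simp only [Multiset.map_cons, Multiset.sum_cons, Multiset.prod_cons, Multiset.card_cons]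
    refine ⟨by omega, ?_⟩
    rw [h2, wgtW, pow_add]
    ring

lemma cycles_eq {n : ℕ} (σ : Perm (Fin n)) : cycles σ + nrmW σ = n := by
  have h := (multiset_aux σ.cycleType fun k hk => two_le_of_mem_cycleType hk).1
  rw [sum_cycleType] at h
  have h2 : (Finset.univ.filter fun x => σ x = x).card + σ.support.card = n := by
    have := Finset.card_filter_add_card_filter_not (s := (Finset.univ : Finset (Fin n)))
      (fun x => σ x = x)
    rw [Finset.card_univ, Fintype.card_fin] at this
    exact this
  unfold cycles nrmW
  omega

lemma orbits_prod {n : ℕ} (σ : Perm (Fin n)) (f : ℕ → ℂ) (hf : f 1 = 1) :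
    ∏ c ∈ orbitsOf σ, f c.card = (σ.cycleType.map f).prod := by
  have hinj : Set.InjOn support (σ.cycleFactorsFinset : Set (Perm (Fin n))) := by
    intro c hc c' hc' h
    obtain ⟨x, hx⟩ := (mem_cycleFactorsFinset_iff.1 hc).1.nonempty_support
    rw [cycle_is_cycleOf hx hc, cycle_is_cycleOf (h ▸ hx) hc']
  have horb : ∀ x, σ x ≠ x → (σ.cycleOf x).support =
      Finset.univ.filter fun y => σ.SameCycle x y := by
    intro x hx
    ext y
    rw [mem_support_cycleOf_iff' hx]
    simp
  rw [cycleType_def, Multiset.map_map]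
  change _ = ∏ c ∈ σ.cycleFactorsFinset, f c.support.card
  rw [← Finset.prod_image (g := support) (f := fun c => f c.card) hinj]
  symm
  apply Finset.prod_subset
  · intro s hs
    obtain ⟨c, hc, rfl⟩ := Finset.mem_image.1 hs
    obtain ⟨x, hx⟩ := (mem_cycleFactorsFinset_iff.1 hc).1.nonempty_support
    have hσx : σ x ≠ x := by
      rw [← (mem_cycleFactorsFinset_iff.1 hc).2 x hx]; exact mem_support.1 hx
    refine Finset.mem_image.2 ⟨x, Finset.mem_univ _, ?_⟩
    rw [cycle_is_cycleOf hx hc, horb x hσx]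
  · intro s hs hs'
    obtain ⟨x, -, rfl⟩ := Finset.mem_image.1 hs
    by_cases hx : σ x = x
    · have : (Finset.univ.filter fun y => σ.SameCycle x y) = {x} := by
        ext y
        simp only [Finset.mem_filter, Finset.mem_univ, true_and, Finset.mem_singleton]
        constructor
        · rintro ⟨i, hi⟩
          rw [← hi]
          exact Equiv.Perm.zpow_apply_eq_self_of_apply_eq_self hx i
        · rintro rfl; exact SameCycle.refl _ _
      rw [this, Finset.card_singleton, hf]
    · exfalso
      apply hs'
      rw [← horb x hx]
      exact Finset.mem_image_of_mem _ (cycleOf_mem_cycleFactorsFinset_iff.2 (mem_support.2 hx))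

end Fin

/-- First-order asymptotics of the Weingarten function: for every `σ ∈ S_n`, as the
integer `d → ∞` (written `d = n + k`, `k → ∞`, so that `S_n` embeds in `{1,…,d}`),
`d^{2n − cycles(σ)} ∫_{U(d)} ∏ᵢ u_{ii} conj(u_{iσ(i)}) dU` converges to
`(−1)^{n − cycles(σ)} ∏_c Cat_{|c|−1}`, the product over the orbits `c` of `σ`. -/
theorem weingarten_first_order_asymptotics (n : ℕ) (hn : 1 ≤ n) (σ : Equiv.Perm (Fin n))
    (μ : ∀ d : ℕ, Measure (Matrix.unitaryGroup (Fin d) ℂ))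
    (hμ : ∀ d : ℕ, (μ d).IsHaarMeasure) (hprob : ∀ d : ℕ, IsProbabilityMeasure (μ d)) :
    Filter.Tendsto
      (fun k : ℕ =>
        ((n + k : ℕ) : ℂ) ^ (2 * n - cycles σ) *
          ∫ U : Matrix.unitaryGroup (Fin (n + k)) ℂ,
            (∏ i : Fin n,
              (U : Matrix (Fin (n + k)) (Fin (n + k)) ℂ)
                (Fin.castLE (Nat.le_add_right n k) i)
                (Fin.castLE (Nat.le_add_right n k) i)) *
            starRingEnd ℂ (∏ i : Fin n,
              (U : Matrix (Fin (n + k)) (Fin (n + k)) ℂ)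
                (Fin.castLE (Nat.le_add_right n k) i)
                (Fin.castLE (Nat.le_add_right n k) (σ i))) ∂(μ (n + k)))
      Filter.atTop
      (nhds ((-1 : ℂ) ^ (n - cycles σ) * ∏ c ∈ orbitsOf σ, (catalan (c.card - 1) : ℂ))) := by
  have hc := cycles_eq σ
  have hmob : (-1 : ℂ) ^ (n - cycles σ) * ∏ c ∈ orbitsOf σ, (catalan (c.card - 1) : ℂ) = mobW σ := by
    rw [orbits_prod σ (fun k => (catalan (k - 1) : ℂ)) (by simp), mobW,
      (multiset_aux σ.cycleType fun k hk => Equiv.Perm.two_le_of_mem_cycleType hk).2,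
      show n - cycles σ = nrmW σ by omega]
    rfl
  rw [hmob]
  have hD0 : ∀ k : ℕ, ((n + k : ℕ) : ℂ) ≠ 0 := fun k => by
    rw [Nat.cast_ne_zero]; omega
  have hD : Filter.Tendsto (fun k : ℕ => (((n + k : ℕ) : ℂ))⁻¹) Filter.atTop (nhds 0) := by
    have h1 : Filter.Tendsto (fun k : ℕ => n + k) Filter.atTop Filter.atTop :=
      Filter.tendsto_atTop_mono (fun k => Nat.le_add_left k n) Filter.tendsto_id
    exact (tendsto_inv_atTop_nhds_zero_nat (𝕜 := ℂ)).comp h1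
  have key := asymp_lim
    (fun S τ k => IW (μ (n + k)) S (Fin.castLE (Nat.le_add_right n k))
      (Fin.castLE (Nat.le_add_right n k)) τ)
    (fun k => ((n + k : ℕ) : ℂ)) hD hD0
    (fun τ k => haveI := hμ (n + k); haveI := hprob (n + k); IW_empty _ _ _ _)
    (fun S τ k => haveI := hμ (n + k); haveI := hprob (n + k); IW_le _ _ _ _ _)
    (fun S τ a k ha => haveI := hμ (n + k); haveI := hprob (n + k)
      IW_rec _ S _ τ ha (Fin.castLE_injective _))
    (n + nrmW σ) Finset.univ σ (Finset.subset_univ _) (by simp)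
  rw [show 2 * n - cycles σ = n + nrmW σ by omega]
  exact key
end

section
/- (Collins) For every integer d ≥ n, the element Σ_{σ ∈ S_n} Wg_d(σ) σ of the group algebra A, where Wg_d(σ) = ∫_{U(d)} ∏_{i=1}^n u_{ii} · conj(u_{i σ(i)}) dU, is invertible with inverse Σ_{τ ∈ S_n} d^{cycles(τ)} τ; that is, (Σ_{σ ∈ S_n} Wg_d(σ) σ) · (Σ_{τ ∈ S_n} d^{cycles(τ)} τ) = 1 in A. -/
open MeasureTheory

namespace WgProof

/-- fixed functions count. -/
lemma cycles_eq_card_quotient {n : ℕ} (σ : Equiv.Perm (Fin n)) :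
    cycles σ = Nat.card (Quotient (Equiv.Perm.SameCycle.setoid σ)) := by
  classical
  have key : Nat.card (Quotient (Equiv.Perm.SameCycle.setoid σ)) =
      Nat.card (σ.cycleFactorsFinset ⊕ {x : Fin n // σ x = x}) := by
    let f : Fin n → (σ.cycleFactorsFinset ⊕ {x : Fin n // σ x = x}) := fun x =>
      if h : σ x = x then Sum.inr ⟨x, h⟩ else
        Sum.inl ⟨σ.cycleOf x, by
          rw [Equiv.Perm.cycleOf_mem_cycleFactorsFinset_iff, Equiv.Perm.mem_support]; exact h⟩
    have hf : ∀ x y, σ.SameCycle x y ↔ f x = f y := by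
      intro x y
      by_cases hx : σ x = x
      · by_cases hy : σ y = y
        · simp only [f, hx, hy, dif_pos, Sum.inr.injEq, Subtype.mk.injEq]
          constructor
          · rintro ⟨i, hi⟩
            rw [Equiv.Perm.zpow_apply_eq_self_of_apply_eq_self hx] at hi
            exact hi
          · rintro rfl; exact Equiv.Perm.SameCycle.refl _ _
        · simp only [f, hx, hy, dif_pos, dif_neg, not_false_eq_true, reduceCtorEq, iff_false]
          intro h
          exact hy ((h.apply_eq_self_iff).1 hx)
      · by_cases hy : σ y = y
        · simp only [f, hx, hy, dif_pos, dif_neg, not_false_eq_true, reduceCtorEq, iff_false]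
          intro h
          exact hx ((h.apply_eq_self_iff).2 hy)
        · simp only [f, hx, hy, dif_neg, not_false_eq_true, Sum.inl.injEq, Subtype.mk.injEq]
          exact Equiv.Perm.sameCycle_iff_cycleOf_eq_of_mem_support
            (Equiv.Perm.mem_support.2 hx) (Equiv.Perm.mem_support.2 hy)
    have hsurj : Function.Surjective f := by
      rintro (⟨c, hc⟩ | ⟨x, hx⟩)
      · have hc' := Equiv.Perm.mem_cycleFactorsFinset_iff.1 hc
        obtain ⟨x, hx, -⟩ := hc'.1
        have hxs : x ∈ c.support := Equiv.Perm.mem_support.2 hx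
        have h1 := hc'.2 x hxs
        have h2 : ¬ σ x = x := by rw [← h1]; exact hx
        refine ⟨x, ?_⟩
        simp only [f, h2, dif_neg, not_false_eq_true, Sum.inl.injEq, Subtype.mk.injEq]
        exact (Equiv.Perm.cycle_is_cycleOf hxs hc).symm
      · exact ⟨x, by simp [f, hx]⟩
    let g : Quotient (Equiv.Perm.SameCycle.setoid σ) →
        (σ.cycleFactorsFinset ⊕ {x : Fin n // σ x = x}) :=
      Quotient.lift f (fun x y h => (hf x y).1 h)
    refine Nat.card_eq_of_bijective g ⟨?_, ?_⟩
    · intro a b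
      induction a using Quotient.inductionOn
      induction b using Quotient.inductionOn
      intro h
      exact Quotient.sound ((hf _ _).2 h)
    · intro y
      obtain ⟨x, hx⟩ := hsurj y
      exact ⟨Quotient.mk _ x, hx⟩
  rw [key, Nat.card_eq_fintype_card, Fintype.card_sum, cycles, Equiv.Perm.cycleType_def]
  simp [Fintype.card_subtype]

lemma sum_fixed (n d : ℕ) (σ : Equiv.Perm (Fin n)) :
    (∑ j : Fin n → Fin d, if j = j ∘ σ then (1 : ℂ) else 0) = (d : ℂ) ^ cycles σ := by
  classical
  have h1 : Nat.card {j : Fin n → Fin d // j = j ∘ σ} =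
      Nat.card (Quotient (Equiv.Perm.SameCycle.setoid σ) → Fin d) := by
    have hinv : ∀ j : Fin n → Fin d, j = j ∘ σ → ∀ x y, σ.SameCycle x y → j x = j y := by
      rintro j hj x y h
      obtain ⟨i, -, -, rfl⟩ := h.exists_pow_eq σ
      clear h
      induction i with
      | zero => rfl
      | succ i ih => rw [pow_succ', Equiv.Perm.mul_apply, ih]; exact congrFun hj _
    refine Nat.card_congr ⟨fun j => Quotient.lift j.1 (hinv j.1 j.2),
      fun q => ⟨fun x => q (Quotient.mk _ x), ?_⟩, ?_, ?_⟩
    · funext x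
      refine congrArg q (Quotient.sound ?_)
      exact ⟨1, by simp⟩
    · intro j; rfl
    · intro q; funext x
      induction x using Quotient.inductionOn
      rfl
  rw [Finset.sum_boole, ← Fintype.card_subtype, ← Nat.card_eq_fintype_card, h1,
    cycles_eq_card_quotient, Nat.card_fun]
  simp

/-- Invariance of a tensor under all unitary matrices. -/
def Inv {n d : ℕ} (T : (Fin n → Fin d) → (Fin n → Fin d) → ℂ) : Prop :=
  ∀ g ∈ Matrix.unitaryGroup (Fin d) ℂ, ∀ j j' : Fin n → Fin d,
    T j j' = ∑ l : Fin n → Fin d, ∑ l' : Fin n → Fin d,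
      (∏ k, g (j k) (l k)) * starRingEnd ℂ (∏ k, g (j' k) (l' k)) * T l l'

lemma Inv.sub {n d : ℕ} {T S : (Fin n → Fin d) → (Fin n → Fin d) → ℂ}
    (hT : Inv T) (hS : Inv S) : Inv (fun j j' => T j j' - S j j') := by
  intro g hg j j'
  simp only [mul_sub, Finset.sum_sub_distrib]
  rw [← hT g hg, ← hS g hg]

lemma unitary_row {d : ℕ} {g : Matrix (Fin d) (Fin d) ℂ}
    (hg : g ∈ Matrix.unitaryGroup (Fin d) ℂ) (x y : Fin d) :
    ∑ c, g x c * starRingEnd ℂ (g y c) = if x = y then 1 else 0 := by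
  have h := congrFun (congrFun (Matrix.mem_unitaryGroup_iff.1 hg) x) y
  rw [Matrix.mul_apply, Matrix.one_apply] at h
  simpa [Matrix.star_apply] using h

lemma unitary_col {d : ℕ} {g : Matrix (Fin d) (Fin d) ℂ}
    (hg : g ∈ Matrix.unitaryGroup (Fin d) ℂ) (x y : Fin d) :
    ∑ c, g c x * starRingEnd ℂ (g c y) = if x = y then 1 else 0 := by
  have h := congrFun (congrFun (Matrix.mem_unitaryGroup_iff'.1 hg) y) x
  rw [Matrix.mul_apply, Matrix.one_apply] at h
  simp only [Matrix.star_apply, RCLike.star_def] at h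
  simp only [mul_comm (g _ x), h, eq_comm]

lemma prod_ite_fun {n d : ℕ} (j l : Fin n → Fin d) :
    (∏ k, if j k = l k then (1 : ℂ) else 0) = if j = l then 1 else 0 := by
  rw [Fintype.prod_ite_zero]
  simp [funext_iff]

lemma sum_prod_fun {n d : ℕ} (F : Fin n → Fin d → ℂ) :
    ∑ l : Fin n → Fin d, ∏ k, F k (l k) = ∏ k, ∑ c, F k c := by
  rw [Finset.prod_univ_sum, Fintype.piFinset_univ]

/-- The elementary tensors are invariant. -/
lemma inv_delta {n d : ℕ} (β : Equiv.Perm (Fin n)) :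
    Inv (fun j j' : Fin n → Fin d => if j' = j ∘ β then (1 : ℂ) else 0) := by
  intro g hg j j'
  simp only [mul_ite, mul_one, mul_zero, Finset.sum_ite_eq', Finset.mem_univ, if_true]
  have h1 : ∀ l : Fin n → Fin d, (∏ k, g (j k) (l k)) *
      starRingEnd ℂ (∏ k, g (j' k) ((l ∘ β) k)) =
      ∏ k, g (j (β k)) ((l ∘ β) k) * starRingEnd ℂ (g (j' k) ((l ∘ β) k)) := by
    intro l
    rw [Finset.prod_mul_distrib, map_prod]
    congr 1
    exact (Equiv.prod_comp β (fun k => g (j k) (l k))).symm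
  simp only [h1]
  have h2 := Equiv.sum_comp (Equiv.arrowCongr β.symm (Equiv.refl (Fin d)))
    (fun l => ∏ k, g (j (β k)) (l k) * starRingEnd ℂ (g (j' k) (l k)))
  have h3 : ∀ l : Fin n → Fin d,
      (Equiv.arrowCongr β.symm (Equiv.refl (Fin d))) l = l ∘ β := by
    intro l; ext k; simp
  simp only [h3] at h2
  rw [h2, sum_prod_fun (fun k c => g (j (β k)) c * starRingEnd ℂ (g (j' k) c))]
  simp only [unitary_row hg]
  rw [prod_ite_fun (fun k => j (β k)) j']
  exact if_congr eq_comm rfl rfl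

lemma Inv.sum_smul {n d : ℕ} {ι : Type} [Fintype ι]
    {S : ι → (Fin n → Fin d) → (Fin n → Fin d) → ℂ}
    (hS : ∀ i, Inv (S i)) (c : ι → ℂ) : Inv (fun j j' => ∑ i, c i * S i j j') := by
  intro g hg j j'
  have : ∀ i, c i * S i j j' = ∑ l : Fin n → Fin d, ∑ l' : Fin n → Fin d,
      (∏ k, g (j k) (l k)) * starRingEnd ℂ (∏ k, g (j' k) (l' k)) * (c i * S i l l') := by
    intro i
    rw [hS i g hg j j', Finset.mul_sum]
    refine Finset.sum_congr rfl fun l _ => ?_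
    rw [Finset.mul_sum]
    refine Finset.sum_congr rfl fun l' _ => ?_
    ring
  simp only [this, Finset.mul_sum]
  rw [Finset.sum_comm]
  refine Finset.sum_congr rfl fun l _ => ?_
  rw [Finset.sum_comm]

/-- Permutation matrices. -/
lemma Inv.perm {n d : ℕ} {T : (Fin n → Fin d) → (Fin n → Fin d) → ℂ} (hT : Inv T)
    (τ : Equiv.Perm (Fin d)) (j j' : Fin n → Fin d) : T (τ ∘ j) (τ ∘ j') = T j j' := by
  have hg : (Matrix.of fun x y => if x = τ y then (1 : ℂ) else 0) ∈
      Matrix.unitaryGroup (Fin d) ℂ := by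
    rw [Matrix.mem_unitaryGroup_iff']
    ext x y
    simp [Matrix.mul_apply, Matrix.one_apply, Matrix.star_apply, eq_comm]
  rw [hT _ hg (τ ∘ j) (τ ∘ j')]
  simp only [Matrix.of_apply, Function.comp, EmbeddingLike.apply_eq_iff_eq, prod_ite_fun]
  simp [apply_ite]

/-- Weight argument with the diagonal matrix having entry `I` at `b`. -/
lemma Inv.weight {n d : ℕ} {T : (Fin n → Fin d) → (Fin n → Fin d) → ℂ} (hT : Inv T)
    (b : Fin d) (j j' : Fin n → Fin d) (p q : Fin n) (hpq : p ≠ q)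
    (hj : ∀ k, j k = b ↔ k = p ∨ k = q) (hj' : ∀ k, j' k ≠ b) : T j j' = 0 := by
  have hg : (Matrix.of fun x y : Fin d => if x = y then (if x = b then Complex.I else 1) else 0) ∈
      Matrix.unitaryGroup (Fin d) ℂ := by
    rw [Matrix.mem_unitaryGroup_iff']
    ext x y
    simp only [Matrix.mul_apply, Matrix.one_apply, Matrix.star_apply, Matrix.of_apply]
    by_cases hxy : x = y
    · subst hxy
      rw [Finset.sum_eq_single x]
      · by_cases hx : x = b <;> simp [hx]
      · intro c _ hc; simp [hc]
      · simp
    · rw [if_neg hxy]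
      refine Finset.sum_eq_zero fun c _ => ?_
      by_cases hc : c = x
      · subst hc; simp [hxy]
      · simp [hc]
  have h := hT _ hg j j'
  simp only [Matrix.of_apply, Fintype.prod_ite_zero, ← funext_iff] at h
  have h1 : (∏ k, if j k = b then Complex.I else 1) = -1 := by
    simp only [hj]
    rw [Finset.prod_ite]
    simp [Finset.filter_or, Finset.filter_eq', Finset.card_pair hpq]
  have h2 : (∏ k, if j' k = b then Complex.I else 1) = 1 := by
    simp [hj']
  rw [h1, h2] at h
  simp [apply_ite] at h
  linear_combination h / 2

/-- Derivative of a rotated tensor. -/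
lemma hasDerivAt_tensor {K : Type} [Fintype K] [DecidableEq K] {d : ℕ}
    (R : ℝ → Fin d → Fin d → ℂ) (X : Fin d → Fin d → ℂ)
    (hR0 : ∀ x y, R 0 x y = if x = y then 1 else 0)
    (hR : ∀ x y, HasDerivAt (fun t => R t x y) (X x y) 0)
    (f : (K → Fin d) → ℂ) (j : K → Fin d) :
    HasDerivAt (fun t => ∑ l : K → Fin d, (∏ k, R t (j k) (l k)) * f l)
      (∑ p, ∑ c, X (j p) c * f (Function.update j p c)) 0 := by
  have h1 : HasDerivAt (fun t => ∑ l : K → Fin d, (∏ k, R t (j k) (l k)) * f l)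
      (∑ l : K → Fin d, (∑ p, (∏ k ∈ Finset.univ.erase p, R 0 (j k) (l k)) • X (j p) (l p)) * f l)
      0 := by
    apply HasDerivAt.fun_sum
    intro l _
    apply HasDerivAt.mul_const
    exact HasDerivAt.fun_finsetProd fun k _ => hR (j k) (l k)
  refine h1.congr_deriv (Eq.symm ?_)
  simp only [Finset.sum_mul]
  conv_rhs => rw [Finset.sum_comm]
  refine Finset.sum_congr rfl fun p _ => ?_
  refine Fintype.sum_of_injective (fun c => Function.update j p c)
    (Function.update_injective j p) _ _ ?_ ?_
  · intro l hl
    have : ∃ k ∈ Finset.univ.erase p, R 0 (j k) (l k) = 0 := by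
      by_contra hcon
      push Not at hcon
      apply hl
      refine ⟨l p, ?_⟩
      funext k
      by_cases hk : k = p
      · subst hk; simp
      · have := hcon k (by simp [hk])
        rw [hR0] at this
        simp only [ne_eq, ite_eq_right_iff, one_ne_zero, imp_false, not_not] at this
        simp [hk, this]
    rw [Finset.prod_eq_zero_iff.2 this]
    simp
  · intro c
    rw [Finset.prod_eq_one]
    · simp
    · intro k hk
      have hkp : k ≠ p := by simpa using hk
      simp [hR0, hkp]

/-- The plane rotation. -/
noncomputable def rot {d : ℕ} (a b : Fin d) (t : ℝ) : Matrix (Fin d) (Fin d) ℂ :=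
  1 + ((Real.cos t : ℂ) - 1) • (Matrix.single a a 1 + Matrix.single b b 1) +
    (Real.sin t : ℂ) • (Matrix.single a b 1 - Matrix.single b a 1)

lemma rot_mem {d : ℕ} {a b : Fin d} (hab : a ≠ b) (t : ℝ) :
    rot a b t ∈ Matrix.unitaryGroup (Fin d) ℂ := by
  rw [Matrix.mem_unitaryGroup_iff]
  have hs : star (rot a b t) =
      1 + ((Real.cos t : ℂ) - 1) • (Matrix.single a a 1 + Matrix.single b b 1) -
    (Real.sin t : ℂ) • (Matrix.single a b 1 - Matrix.single b a 1) := by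
    rw [rot, Matrix.star_eq_conjTranspose]
    simp only [Matrix.conjTranspose_add, Matrix.conjTranspose_sub, Matrix.conjTranspose_smul,
      Matrix.conjTranspose_single, Matrix.conjTranspose_one, star_sub, star_one, RCLike.star_def,
      Complex.conj_ofReal]
    module
  have hcs : (Real.cos t : ℂ) ^ 2 + (Real.sin t : ℂ) ^ 2 = 1 := by
    exact_mod_cast Real.cos_sq_add_sin_sq t
  rw [hs, rot]
  have e1 : (Matrix.single a a (1 : ℂ) + Matrix.single b b 1) *
      (Matrix.single a a 1 + Matrix.single b b 1) =
      Matrix.single a a 1 + Matrix.single b b 1 := by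
    simp [mul_add, add_mul, hab, hab.symm]
  have e2 : (Matrix.single a a (1 : ℂ) + Matrix.single b b 1) *
      (Matrix.single a b 1 - Matrix.single b a 1) =
      Matrix.single a b 1 - Matrix.single b a 1 := by
    simp only [mul_sub, add_mul]
    simp [hab, hab.symm]
    try abel
  have e3 : (Matrix.single a b (1 : ℂ) - Matrix.single b a 1) *
      (Matrix.single a a 1 + Matrix.single b b 1) =
      Matrix.single a b 1 - Matrix.single b a 1 := by
    simp only [mul_add, sub_mul]
    simp [hab, hab.symm]
    try abel
  have e4 : (Matrix.single a b (1 : ℂ) - Matrix.single b a 1) *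
      (Matrix.single a b 1 - Matrix.single b a 1) =
      -(Matrix.single a a 1 + Matrix.single b b 1) := by
    simp only [mul_sub, sub_mul]
    simp [hab, hab.symm]
    try abel
  generalize (Matrix.single a a (1 : ℂ) + Matrix.single b b 1) = P at *
  generalize (Matrix.single a b (1 : ℂ) - Matrix.single b a 1) = X at *
  simp only [mul_add, add_mul, mul_sub, one_mul, mul_one, smul_mul_assoc, mul_smul_comm,
    e1, e2, e3, e4]
  generalize (Real.cos t : ℂ) = c at *
  generalize (Real.sin t : ℂ) = s at *
  have : (c ^ 2 + s ^ 2 - 1) • P = 0 := by rw [hcs]; simp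
  rw [← sub_eq_zero, ← this]
  module

lemma rot_conj {d : ℕ} (a b : Fin d) (t : ℝ) (x y : Fin d) :
    starRingEnd ℂ (rot a b t x y) = rot a b t x y := by
  have hI : ∀ (p : Prop) [Decidable p], starRingEnd ℂ (if p then (1 : ℂ) else 0) =
      if p then (1 : ℂ) else 0 := by
    intro p _; split_ifs <;> simp
  simp only [rot, Matrix.single_apply, Matrix.one_apply, Matrix.add_apply, Matrix.sub_apply,
    Matrix.smul_apply, smul_eq_mul, map_add, map_sub, map_mul, hI, Complex.conj_ofReal, map_one]

lemma rot_zero {d : ℕ} (a b : Fin d) (x y : Fin d) :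
    rot a b 0 x y = if x = y then 1 else 0 := by
  simp [rot, Matrix.one_apply]

lemma rot_deriv {d : ℕ} (a b : Fin d) (x y : Fin d) :
    HasDerivAt (fun t => rot a b t x y)
      ((Matrix.single a b (1 : ℂ) - Matrix.single b a 1 : Matrix (Fin d) (Fin d) ℂ) x y) 0 := by
  have hc : HasDerivAt (fun t : ℝ => ((Real.cos t : ℝ) : ℂ)) ((-Real.sin 0 : ℝ) : ℂ) 0 :=
    (Real.hasDerivAt_cos 0).ofReal_comp
  have hs : HasDerivAt (fun t : ℝ => ((Real.sin t : ℝ) : ℂ)) ((Real.cos 0 : ℝ) : ℂ) 0 :=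
    (Real.hasDerivAt_sin 0).ofReal_comp
  have := ((((hc.sub_const 1).mul_const
    ((Matrix.single a a (1 : ℂ) + Matrix.single b b 1 : Matrix (Fin d) (Fin d) ℂ) x y)).const_add
    ((1 : Matrix (Fin d) (Fin d) ℂ) x y)).add (hs.mul_const
      ((Matrix.single a b (1 : ℂ) - Matrix.single b a 1 : Matrix (Fin d) (Fin d) ℂ) x y)))
  refine HasDerivAt.congr_deriv this ?_
  simp

/-- Infinitesimal invariance. -/
lemma Inv.infinitesimal {n d : ℕ} {T : (Fin n → Fin d) → (Fin n → Fin d) → ℂ} (hT : Inv T)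
    {a b : Fin d} (hab : a ≠ b) (j j' : Fin n → Fin d) :
    (∑ p, ((if j p = a then T (Function.update j p b) j' else 0) -
      (if j p = b then T (Function.update j p a) j' else 0))) +
    (∑ p, ((if j' p = a then T j (Function.update j' p b) else 0) -
      (if j' p = b then T j (Function.update j' p a) else 0))) = 0 := by
  have h1 := hasDerivAt_tensor (K := Fin n ⊕ Fin n) (fun t => rot a b t)
    (Matrix.single a b (1 : ℂ) - Matrix.single b a 1 : Matrix (Fin d) (Fin d) ℂ)
    (rot_zero a b) (rot_deriv a b)
    (fun L => T (L ∘ Sum.inl) (L ∘ Sum.inr)) (Sum.elim j j')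
  have h2 : (fun t => ∑ l : Fin n ⊕ Fin n → Fin d,
      (∏ k, rot a b t (Sum.elim j j' k) (l k)) * T (l ∘ Sum.inl) (l ∘ Sum.inr)) =
      fun _ => T j j' := by
    funext t
    rw [hT _ (rot_mem hab t) j j', ← Fintype.sum_prod_type']
    refine Fintype.sum_equiv (Equiv.sumArrowEquivProdArrow _ _ _) _ _ fun l => ?_
    simp [Fintype.prod_sum_type, map_prod, rot_conj, Equiv.sumArrowEquivProdArrow]
  rw [h2] at h1
  have h3 := h1.unique (hasDerivAt_const (0 : ℝ) (T j j'))
  have h4 : ∀ (x : Fin d) (F : Fin d → ℂ),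
      ∑ c, (Matrix.single a b (1 : ℂ) - Matrix.single b a 1 : Matrix (Fin d) (Fin d) ℂ) x c * F c =
      (if x = a then F b else 0) - (if x = b then F a else 0) := by
    intro x F
    simp only [Matrix.sub_apply, sub_mul, Finset.sum_sub_distrib, Matrix.single_apply]
    congr 1
    · by_cases hx : x = a
      · simp [hx]
      · simp [hx, Ne.symm hx]
    · by_cases hx : x = b
      · simp [hx]
      · simp [hx, Ne.symm hx]
  simp only [h4, Fintype.sum_sum_type, Sum.elim_inl, Sum.elim_inr, Sum.update_elim_inl,
    Sum.update_elim_inr, Sum.elim_comp_inl, Sum.elim_comp_inr] at h3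
  exact h3

/-- The key vanishing lemma. -/
lemma Inv.vanish {n d : ℕ} (hd : n ≤ d) {T : (Fin n → Fin d) → (Fin n → Fin d) → ℂ} (hT : Inv T)
    (h0 : ∀ β : Equiv.Perm (Fin n), T (Fin.castLE hd) (Fin.castLE hd ∘ β) = 0) :
    ∀ (m : ℕ) (j : Fin n → Fin d), (Finset.univ.image j).card + m = n →
      ∀ β : Equiv.Perm (Fin n), T j (j ∘ β) = 0 := by
  intro m
  induction m with
  | zero =>
    intro j hj β
    have hinj : Function.Injective j := by
      have h1 : (Finset.univ.image j).card = (Finset.univ : Finset (Fin n)).card := by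
        simpa using hj
      have h2 := Finset.card_image_iff.1 h1
      simpa using h2
    obtain ⟨τ, hτ⟩ := Equiv.Perm.exists_extending_pair (Fin.castLE hd) j
      (Fin.castLE_injective hd) hinj
    have e : j = τ ∘ Fin.castLE hd := by funext k; exact (hτ k).symm
    rw [e, Function.comp_assoc, hT.perm]
    exact h0 β
  | succ m ih =>
    intro j hj β
    have hninj : ¬ Function.Injective j := by
      intro h
      rw [Finset.card_image_of_injective _ h] at hj
      simp at hj
    obtain ⟨p, q, hpq, hne⟩ : ∃ p q, j p = j q ∧ p ≠ q := by
      simpa [Function.Injective] using hninj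
    obtain ⟨b, hb⟩ : ∃ b, b ∉ Finset.univ.image j := by
      by_contra hcon
      push Not at hcon
      have : Finset.univ.image j = Finset.univ := Finset.eq_univ_of_forall hcon
      rw [this, Finset.card_univ, Fintype.card_fin] at hj
      omega
    have hb' : ∀ k, j k ≠ b := by
      intro k hk; exact hb (by simp [← hk])
    have himg : Finset.univ.image (Function.update j p b) = insert b (Finset.univ.image j) := by
      ext x
      simp only [Finset.mem_image, Finset.mem_univ, true_and, Finset.mem_insert]
      constructor
      · rintro ⟨k, rfl⟩
        by_cases hk : k = p
        · subst hk; simp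
        · right; exact ⟨k, by simp [hk]⟩
      · rintro (rfl | ⟨k, rfl⟩)
        · exact ⟨p, by simp⟩
        · by_cases hk : k = p
          · subst hk; exact ⟨q, by simp [hne.symm, hpq]⟩
          · exact ⟨k, by simp [hk]⟩
    have hcard : (Finset.univ.image (Function.update j p b)).card + m = n := by
      rw [himg, Finset.card_insert_of_notMem hb]; omega
    have hI := hT.infinitesimal (hb' p) (Function.update j p b) (j ∘ β)
    have hsecond : ∑ r, ((if (j ∘ β) r = j p then
        T (Function.update j p b) (Function.update (j ∘ β) r b) else 0) -
        (if (j ∘ β) r = b then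
          T (Function.update j p b) (Function.update (j ∘ β) r (j p)) else 0)) = 0 := by
      refine Finset.sum_eq_zero fun r _ => ?_
      rw [if_neg (show ¬ (j ∘ β) r = b from hb' (β r)), sub_zero]
      split_ifs with hr
      · have e : Function.update (j ∘ β) r b =
            Function.update j p b ∘ (Equiv.swap p (β r) * β : Equiv.Perm (Fin n)) := by
          funext k
          simp only [Function.comp_apply, Equiv.Perm.mul_apply]
          by_cases hk : k = r
          · subst hk; simp
          · have h1 : β k ≠ β r := fun h => hk (β.injective h)
            rw [Function.update_of_ne hk]
            by_cases h2 : β k = p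
            · rw [h2, Equiv.swap_apply_left, Function.update_of_ne (by rw [← h2]; exact h1.symm)]
              simp only [Function.comp_apply] at hr ⊢
              rw [h2, hr]
            · rw [Equiv.swap_apply_of_ne_of_ne h2 h1, Function.update_of_ne h2]
              rfl
        rw [e]
        exact ih _ hcard _
      · rfl
    rw [hsecond, add_zero, Finset.sum_eq_single p] at hI
    · simpa [(hb' p).symm] using hI
    · intro r _ hr
      rw [Function.update_of_ne hr, if_neg (hb' r), sub_zero]
      split_ifs with hr2
      · refine hT.weight b _ _ p r hr.symm ?_ ?_
        · intro k
          by_cases hk : k = r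
          · subst hk; simp
          · by_cases hk2 : k = p
            · subst hk2; simp [hk]
            · simp [hk, hk2, hb' k]
        · intro k; exact hb' _
      · rfl
    · simp

/-- Invariants are determined by their values on injective indices. -/
lemma Inv.diag {n d : ℕ} (hd : n ≤ d) {T : (Fin n → Fin d) → (Fin n → Fin d) → ℂ} (hT : Inv T)
    (j : Fin n → Fin d) :
    T j j = ∑ β : Equiv.Perm (Fin n), T (Fin.castLE hd) (Fin.castLE hd ∘ β) *
      if j = j ∘ β then (1 : ℂ) else 0 := by
  have hD := hT.sub (Inv.sum_smul (fun β : Equiv.Perm (Fin n) => inv_delta (d := d) β)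
    (fun β => T (Fin.castLE hd) (Fin.castLE hd ∘ β)))
  have hle : (Finset.univ.image j).card ≤ n := by
    simpa using Finset.card_image_le (s := Finset.univ) (f := j)
  have h := hD.vanish hd (fun β => ?_) (n - (Finset.univ.image j).card) j (by omega) 1
  · simpa [sub_eq_zero] using h
  · rw [sub_eq_zero, Finset.sum_eq_single β]
    · simp
    · intro γ _ hγ
      rw [if_neg, mul_zero]
      intro h
      apply hγ
      ext k
      have := congrFun h k
      simp only [Function.comp_apply] at this
      rw [Fin.castLE_injective hd this]
    · simp

instance borelU (d : ℕ) : BorelSpace (Matrix.unitaryGroup (Fin d) ℂ) := ⟨rfl⟩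

lemma continuous_entry {d : ℕ} (x y : Fin d) :
    Continuous (fun U : Matrix.unitaryGroup (Fin d) ℂ => (U : Matrix (Fin d) (Fin d) ℂ) x y) :=
  continuous_subtype_val.matrix_elem x y

lemma integrable_mono {n d : ℕ} (μ : Measure (Matrix.unitaryGroup (Fin d) ℂ))
    [IsProbabilityMeasure μ] (r c r' c' : Fin n → Fin d) :
    Integrable (fun U : Matrix.unitaryGroup (Fin d) ℂ =>
      (∏ k, (U : Matrix (Fin d) (Fin d) ℂ) (r k) (c k)) *
        starRingEnd ℂ (∏ k, (U : Matrix (Fin d) (Fin d) ℂ) (r' k) (c' k))) μ := by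
  have hc : Continuous (fun U : Matrix.unitaryGroup (Fin d) ℂ =>
      (∏ k, (U : Matrix (Fin d) (Fin d) ℂ) (r k) (c k)) *
        starRingEnd ℂ (∏ k, (U : Matrix (Fin d) (Fin d) ℂ) (r' k) (c' k))) := by
    refine Continuous.mul ?_ (Complex.continuous_conj.comp ?_)
    · exact continuous_finsetProd _ fun k _ => continuous_entry _ _
    · exact continuous_finsetProd _ fun k _ => continuous_entry _ _
  refine Integrable.of_bound hc.aestronglyMeasurable 1 (Filter.Eventually.of_forall fun U => ?_)
  rw [norm_mul, RCLike.norm_conj, norm_prod, norm_prod]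
  refine mul_le_one₀ ?_ (Finset.prod_nonneg fun _ _ => norm_nonneg _) ?_
  · exact Finset.prod_le_one (fun _ _ => norm_nonneg _)
      fun _ _ => entry_norm_bound_of_unitary U.2 _ _
  · exact Finset.prod_le_one (fun _ _ => norm_nonneg _)
      fun _ _ => entry_norm_bound_of_unitary U.2 _ _

/-- The moment tensor. -/
noncomputable def mom {n d : ℕ} (μ : Measure (Matrix.unitaryGroup (Fin d) ℂ))
    (c c' : Fin n → Fin d) (j j' : Fin n → Fin d) : ℂ :=
  ∫ U : Matrix.unitaryGroup (Fin d) ℂ, (∏ k, (U : Matrix (Fin d) (Fin d) ℂ) (j k) (c k)) *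
        starRingEnd ℂ (∏ k, (U : Matrix (Fin d) (Fin d) ℂ) (j' k) (c' k)) ∂μ

lemma mom_inv {n d : ℕ} (μ : Measure (Matrix.unitaryGroup (Fin d) ℂ)) [μ.IsHaarMeasure]
    [IsProbabilityMeasure μ] (c c' : Fin n → Fin d) : Inv (mom μ c c') := by
  intro g hg j j'
  simp only [mom]
  rw [← integral_mul_left_eq_self _ (⟨g, hg⟩ : Matrix.unitaryGroup (Fin d) ℂ)]
  have hexp : ∀ (U : Matrix.unitaryGroup (Fin d) ℂ) (j c : Fin n → Fin d),
      ∏ k, ((⟨g, hg⟩ * U : Matrix.unitaryGroup (Fin d) ℂ) : Matrix (Fin d) (Fin d) ℂ) (j k) (c k) =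
      ∑ l : Fin n → Fin d, (∏ k, g (j k) (l k)) *
        ∏ k, (U : Matrix (Fin d) (Fin d) ℂ) (l k) (c k) := by
    intro U j c
    simp only [← Finset.prod_mul_distrib]
    rw [sum_prod_fun (fun k x => g (j k) x * (U : Matrix (Fin d) (Fin d) ℂ) x (c k))]
    rfl
  simp only [hexp, map_sum, map_mul, Finset.sum_mul_sum]
  rw [integral_finsetSum]
  · refine Finset.sum_congr rfl fun l _ => ?_
    rw [integral_finsetSum]
    · refine Finset.sum_congr rfl fun l' _ => ?_
      rw [← integral_const_mul]
      refine integral_congr_ae (Filter.Eventually.of_forall fun U => ?_)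
      simp only
      ring
    · intro l' _
      refine ((integrable_mono μ l c l' c').const_mul
        ((∏ k, g (j k) (l k)) * starRingEnd ℂ (∏ k, g (j' k) (l' k)))).congr
        (Filter.Eventually.of_forall fun U => ?_)
      simp only
      ring
  · intro l _
    refine integrable_finsetSum _ fun l' _ => ?_
    refine ((integrable_mono μ l c l' c').const_mul
      ((∏ k, g (j k) (l k)) * starRingEnd ℂ (∏ k, g (j' k) (l' k)))).congr
      (Filter.Eventually.of_forall fun U => ?_)
    simp only
    ring

lemma mom_trace {n d : ℕ} (μ : Measure (Matrix.unitaryGroup (Fin d) ℂ))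
    [IsProbabilityMeasure μ] (c c' : Fin n → Fin d) :
    ∑ j, mom μ c c' j j = if c = c' then 1 else 0 := by
  simp only [mom]
  rw [← integral_finsetSum _ fun j _ => integrable_mono μ j c j c']
  have : ∀ U : Matrix.unitaryGroup (Fin d) ℂ,
      (∑ j : Fin n → Fin d, (∏ k, (U : Matrix (Fin d) (Fin d) ℂ) (j k) (c k)) *
        starRingEnd ℂ (∏ k, (U : Matrix (Fin d) (Fin d) ℂ) (j k) (c' k))) =
      if c = c' then 1 else 0 := by
    intro U
    simp only [map_prod, ← Finset.prod_mul_distrib]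
    rw [sum_prod_fun (fun k x => (U : Matrix (Fin d) (Fin d) ℂ) x (c k) *
      starRingEnd ℂ ((U : Matrix (Fin d) (Fin d) ℂ) x (c' k)))]
    simp only [unitary_col U.2]
    exact prod_ite_fun c c'
  simp only [this]
  simp

/-- The Weingarten orthogonality relation. -/
lemma wg_relation {n d : ℕ} (hd : n ≤ d) (μ : Measure (Matrix.unitaryGroup (Fin d) ℂ))
    [μ.IsHaarMeasure] [IsProbabilityMeasure μ] (π : Equiv.Perm (Fin n)) :
    ∑ β : Equiv.Perm (Fin n),
      mom μ (Fin.castLE hd) (Fin.castLE hd ∘ (π * β⁻¹ : Equiv.Perm (Fin n)))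
        (Fin.castLE hd) (Fin.castLE hd) * (d : ℂ) ^ cycles β =
      if π = 1 then 1 else 0 := by
  have h := mom_trace μ (Fin.castLE hd) (Fin.castLE hd ∘ π)
  simp only [(mom_inv μ (Fin.castLE hd) (Fin.castLE hd ∘ π)).diag hd] at h
  rw [Finset.sum_comm] at h
  simp only [← Finset.mul_sum, sum_fixed] at h
  have h1 : (Fin.castLE hd = Fin.castLE hd ∘ π) ↔ π = 1 := by
    constructor
    · intro hh; ext k
      have := congrFun hh k
      simp only [Function.comp_apply] at this
      rw [← Fin.castLE_injective hd this]; rfl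
    · rintro rfl; rfl
  rw [if_congr h1 rfl rfl] at h
  rw [← h]
  refine Finset.sum_congr rfl fun β _ => ?_
  congr 1
  simp only [mom]
  congr 1
  funext U
  congr 2
  rw [← Equiv.prod_comp β]
  simp

end WgProof

/-- Collins' theorem: for `d ≥ n`, the element `Σ_σ Wg_d(σ) σ` of the group algebra,
where `Wg_d(σ) = ∫_{U(d)} ∏ᵢ u_{ii} conj(u_{iσ(i)}) dU`, is inverse to
`Σ_τ d^{cycles(τ)} τ`: their product is `1`. -/
theorem weingarten_mul_sum_d_pow_cycles_eq_one (n : ℕ) (hn : 1 ≤ n) (d : ℕ) (hd : n ≤ d)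
    (μ : Measure (Matrix.unitaryGroup (Fin d) ℂ)) (hμ : μ.IsHaarMeasure)
    (hprob : IsProbabilityMeasure μ) :
    (∑ σ : Equiv.Perm (Fin n),
        MonoidAlgebra.single σ
          (∫ U : Matrix.unitaryGroup (Fin d) ℂ,
            (∏ i : Fin n,
              (U : Matrix (Fin d) (Fin d) ℂ) (Fin.castLE hd i) (Fin.castLE hd i)) *
            starRingEnd ℂ (∏ i : Fin n,
              (U : Matrix (Fin d) (Fin d) ℂ) (Fin.castLE hd i) (Fin.castLE hd (σ i))) ∂μ)) *
      (∑ τ : Equiv.Perm (Fin n), MonoidAlgebra.single τ ((d : ℂ) ^ cycles τ)) =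
      (1 : MonoidAlgebra ℂ (Equiv.Perm (Fin n))) := by
  classical
  have hterm : ∀ σ τ : Equiv.Perm (Fin n), ∀ x y : ℂ,
      (MonoidAlgebra.single σ x * MonoidAlgebra.single τ y :
        MonoidAlgebra ℂ (Equiv.Perm (Fin n))) = MonoidAlgebra.single (σ * τ) (x * y) :=
    fun σ τ x y => MonoidAlgebra.single_mul_single σ τ x y
  rw [Finset.sum_mul_sum]
  simp only [hterm]
  rw [Finset.sum_comm]
  have hre : ∀ (τ : Equiv.Perm (Fin n)) (w : Equiv.Perm (Fin n) → ℂ) (y : ℂ),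
      ∑ σ, (MonoidAlgebra.single (σ * τ) (w σ * y) : MonoidAlgebra ℂ (Equiv.Perm (Fin n))) =
      ∑ π, MonoidAlgebra.single π (w (π * τ⁻¹) * y) := by
    intro τ w y
    refine Fintype.sum_equiv (Equiv.mulRight τ) _ _ fun σ => ?_
    simp
  simp only [hre _ (fun σ => ∫ U : Matrix.unitaryGroup (Fin d) ℂ,
            (∏ i : Fin n,
              (U : Matrix (Fin d) (Fin d) ℂ) (Fin.castLE hd i) (Fin.castLE hd i)) *
            starRingEnd ℂ (∏ i : Fin n,
              (U : Matrix (Fin d) (Fin d) ℂ) (Fin.castLE hd i) (Fin.castLE hd (σ i))) ∂μ)]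
  rw [Finset.sum_comm]
  have hsum : ∀ (π : Equiv.Perm (Fin n)) (F : Equiv.Perm (Fin n) → ℂ),
      ∑ τ, (MonoidAlgebra.single π (F τ) : MonoidAlgebra ℂ (Equiv.Perm (Fin n))) =
      MonoidAlgebra.single π (∑ τ, F τ) := by
    intro π F
    exact (map_sum (MonoidAlgebra.singleAddHom π) F Finset.univ).symm
  simp only [hsum]
  have hw := WgProof.wg_relation hd μ
  simp only [WgProof.mom, Function.comp_apply] at hw
  simp only [hw]
  rw [Finset.sum_eq_single 1]
  · simp [MonoidAlgebra.one_def]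
  · intro π _ hπ
    simp [hπ]
  · simp
end
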